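/- arXiv:1505.00617 — 5 statements merged into one kernel-verified Lean document; each statement's English description precedes it below -/
import Mathlib

section
/- Let I ⊆ ℝ be a nondegenerate interval, n ∈ ℕ, let ω = (ω_1,…,ω_n) be an n-dimensional positive Chebyshev system over I, and let ω_{n+1} : I → ℝ be such that ω* = (ω_1,…,ω_n,ω_{n+1}) is an (n+1)-dimensional positive Chebyshev system over I. Then a function f : I → ℝ is ω-convex on I if and only if D̲_{ω*} f(p) ≥ 0 for all p ∈ I. -/
/-- `Phi ω x` is the determinant `det(ωᵢ(xⱼ))` of an `n`-tuple of functions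
evaluated at an `n`-tuple of points. -/
noncomputable def Phi {n : ℕ} (ω : Fin n → ℝ → ℝ) (x : Fin n → ℝ) : ℝ :=
  (Matrix.of fun i j => ω i (x j)).det

/-- `ω` is an `n`-dimensional positive Chebyshev system over `H`:
`Phi ω` is positive on all strictly increasing `n`-tuples of elements of `H`. -/
def IsPosChebyshev {n : ℕ} (ω : Fin n → ℝ → ℝ) (H : Set ℝ) : Prop :=
  ∀ x : Fin n → ℝ, StrictMono x → (∀ j, x j ∈ H) → 0 < Phi ω x

/-- The generalized `ω*`-divided difference `[x₀,…,xₙ; f]_{ω*}`, where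
`ω* = (ω₁,…,ωₙ,ω')`:  `Φ_{(ω,f)}(x) / Φ_{ω*}(x)`. -/
noncomputable def divDiff {n : ℕ} (ω : Fin n → ℝ → ℝ) (ω' : ℝ → ℝ) (f : ℝ → ℝ)
    (x : Fin (n + 1) → ℝ) : ℝ :=
  Phi (Fin.snoc ω f) x / Phi (Fin.snoc ω ω') x

/-- `f` is `ω`-convex on `S`: `Φ_{(ω,f)}(x₀,…,xₙ) ≥ 0` for every strictly
increasing `(n+1)`-tuple of elements of `S`. -/
def OmegaConvexOn {n : ℕ} (ω : Fin n → ℝ → ℝ) (S : Set ℝ) (f : ℝ → ℝ) : Prop :=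
  ∀ x : Fin (n + 1) → ℝ, StrictMono x → (∀ j, x j ∈ S) → 0 ≤ Phi (Fin.snoc ω f) x

/-- The lower Dinghas type derivative `D̲_{ω*} f(p)`: the limit, as `δ → 0⁺`, of the
infimum of the divided differences `[x₀,…,xₙ; f]_{ω*}` over strictly increasing
tuples in `I` with `x₀ ≤ p ≤ xₙ` and `xₙ − x₀ < δ`; realized as a `liminf`
(with values in `EReal`) along the filter `⨅ δ > 0, 𝓟 {tuples with xₙ − x₀ < δ}`. -/
noncomputable def dinghas {n : ℕ} (ω : Fin n → ℝ → ℝ) (ω' : ℝ → ℝ) (f : ℝ → ℝ)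
    (I : Set ℝ) (p : ℝ) : EReal :=
  Filter.liminf (fun x : Fin (n + 1) → ℝ => (divDiff ω ω' f x : EReal))
    (⨅ δ ∈ Set.Ioi (0 : ℝ), Filter.principal
      {x : Fin (n + 1) → ℝ | StrictMono x ∧ (∀ j, x j ∈ I) ∧
        x 0 ≤ p ∧ p ≤ x (Fin.last n) ∧ x (Fin.last n) - x 0 < δ})

theorem Phi_snoc_expand {n : ℕ} (ω : Fin n → ℝ → ℝ) (h : ℝ → ℝ) (t : Fin (n + 1) → ℝ) :
    Phi (Fin.snoc ω h) t =
      ∑ j : Fin (n + 1), (-1) ^ (n + (j : ℕ)) * h (t j) * Phi ω (t ∘ j.succAbove) := by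
  unfold Phi
  rw [Matrix.det_succ_row _ (Fin.last n)]
  refine Finset.sum_congr rfl fun j _ => ?_
  have : (Matrix.of fun i j => (Fin.snoc ω h : Fin (n + 1) → ℝ → ℝ) i (t j)).submatrix
      (Fin.last n).succAbove j.succAbove
      = Matrix.of fun i k => ω i ((t ∘ j.succAbove) k) := by
    ext a b
    simp
  rw [this]
  simp

theorem Phi_snoc_self {n : ℕ} (ω : Fin n → ℝ → ℝ) (l : Fin n) (t : Fin (n + 1) → ℝ) :
    Phi (Fin.snoc ω (ω l)) t = 0 := by
  unfold Phi
  refine Matrix.det_zero_of_row_eq (i := l.castSucc) (j := Fin.last n)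
    (Fin.castSucc_lt_last l).ne ?_
  ext j
  simp

theorem Phi_snoc_sub_mul {n : ℕ} (ω : Fin n → ℝ → ℝ) (g h : ℝ → ℝ) (c : ℝ)
    (t : Fin (n + 1) → ℝ) :
    Phi (Fin.snoc ω (fun s => g s - c * h s)) t =
      Phi (Fin.snoc ω g) t - c * Phi (Fin.snoc ω h) t := by
  simp only [Phi_snoc_expand, Finset.mul_sum]
  rw [← Finset.sum_sub_distrib]
  refine Finset.sum_congr rfl fun j _ => ?_
  ring

theorem Phi_snoc_sub_comb {n : ℕ} (ω : Fin n → ℝ → ℝ) (g : ℝ → ℝ) (a : Fin n → ℝ)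
    (t : Fin (n + 1) → ℝ) :
    Phi (Fin.snoc ω (fun s => g s - ∑ l, a l * ω l s)) t = Phi (Fin.snoc ω g) t := by
  have h0 : ∑ l, a l * Phi (Fin.snoc ω (ω l)) t = 0 := by simp [Phi_snoc_self]
  have h1 : ∑ l, a l * Phi (Fin.snoc ω (ω l)) t =
      ∑ j : Fin (n + 1), (-1) ^ (n + (j : ℕ)) * (∑ l, a l * ω l (t j))
        * Phi ω (t ∘ j.succAbove) := by
    simp only [Phi_snoc_expand, Finset.mul_sum, Finset.sum_mul]
    rw [Finset.sum_comm]
    refine Finset.sum_congr rfl fun j _ => Finset.sum_congr rfl fun l _ => ?_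
    ring
  rw [← sub_zero (Phi (Fin.snoc ω g) t), ← h0, h1, Phi_snoc_expand, Phi_snoc_expand,
    ← Finset.sum_sub_distrib]
  refine Finset.sum_congr rfl fun j _ => ?_
  ring

theorem exists_interp {n : ℕ} (ω : Fin n → ℝ → ℝ) (g : ℝ → ℝ) (t : Fin n → ℝ)
    (ht : Phi ω t ≠ 0) : ∃ a : Fin n → ℝ, ∀ j, g (t j) = ∑ l, a l * ω l (t j) := by
  set M : Matrix (Fin n) (Fin n) ℝ := Matrix.of fun i j => ω i (t j)
  have hM : IsUnit M.det := isUnit_iff_ne_zero.mpr ht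
  refine ⟨Matrix.vecMul (fun j => g (t j)) M⁻¹, fun j => ?_⟩
  have : Matrix.vecMul (Matrix.vecMul (fun j => g (t j)) M⁻¹) M = fun j => g (t j) := by
    rw [Matrix.vecMul_vecMul, Matrix.nonsing_inv_mul _ hM, Matrix.vecMul_one]
  have := congrFun this j
  rw [← this]
  rfl

/-- Removing an interior point keeps positivity. -/
theorem Phi_mid_pos {n : ℕ} (hn : 0 < n) {I : Set ℝ} {ω : Fin n → ℝ → ℝ}
    (hω : IsPosChebyshev ω I) (g : ℝ → ℝ) (z : Fin (n + 2) → ℝ) (hz : StrictMono z)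
    (hzI : ∀ j, z j ∈ I) (k : Fin (n + 2)) (hk0 : k ≠ 0) (hkl : k ≠ Fin.last _)
    (h0 : 0 < Phi (Fin.snoc ω g) (z ∘ Fin.succ))
    (h1 : 0 < Phi (Fin.snoc ω g) (z ∘ Fin.castSucc)) :
    0 < Phi (Fin.snoc ω g) (z ∘ k.succAbove) := by
  have hpos : ∀ (t : Fin (n + 1) → ℝ), StrictMono t → (∀ j, t j ∈ I) → ∀ j : Fin (n + 1),
      0 < Phi ω (t ∘ j.succAbove) := fun t ht htI j =>
    hω _ (ht.comp (Fin.strictMono_succAbove j)) fun i => htI _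
  obtain ⟨a, ha⟩ := exists_interp ω g (fun i : Fin n => z i.succ.castSucc)
    (hω _ (fun i j hij => hz (by simpa using hij)) fun i => hzI _).ne'
  rw [← Phi_snoc_sub_comb ω g a] at h0 h1 ⊢
  set h : ℝ → ℝ := fun s => g s - ∑ l, a l * ω l s with hh
  have hint : ∀ i : Fin (n + 2), i ≠ 0 → i ≠ Fin.last _ → h (z i) = 0 := by
    intro i hi hl
    obtain ⟨j, rfl⟩ := Fin.exists_castSucc_eq.mpr hl
    have hj : j ≠ 0 := by rintro rfl; simp at hi
    obtain ⟨l, rfl⟩ := Fin.exists_succ_eq.mpr hj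
    have := ha l
    simp only [hh]
    linarith
  have hn2 : ((-1 : ℝ)) ^ (n + n) = 1 := Even.neg_one_pow ⟨n, rfl⟩
  have e0 : 0 < h (z (Fin.last _)) := by
    rw [Phi_snoc_expand, Finset.sum_eq_single (Fin.last n)] at h0
    · simp only [Fin.val_last, hn2, one_mul, Function.comp_apply, Fin.succ_last] at h0
      exact pos_of_mul_pos_left h0
        (hpos (z ∘ Fin.succ) (hz.comp Fin.strictMono_succ) (fun _ => hzI _) _).le
    · intro j _ hj
      have : h ((z ∘ Fin.succ) j) = 0 := hint _ (Fin.succ_ne_zero j) (by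
        rw [← Fin.succ_last]; simpa using hj)
      rw [this]; simp
    · simp
  have e1 : 0 < (-1) ^ n * h (z 0) := by
    rw [Phi_snoc_expand, Finset.sum_eq_single 0] at h1
    · simp only [Fin.val_zero, add_zero, Function.comp_apply, Fin.castSucc_zero] at h1
      exact pos_of_mul_pos_left h1
        (hpos (z ∘ Fin.castSucc) (hz.comp Fin.strictMono_castSucc) (fun _ => hzI _) _).le
    · intro j _ hj
      have : h ((z ∘ Fin.castSucc) j) = 0 := hint _ (by
        rw [← Fin.castSucc_zero]; simpa using hj) (Fin.castSucc_lt_last j).ne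
      rw [this]; simp
    · simp
  rw [Phi_snoc_expand]
  have hp := hpos (z ∘ k.succAbove) (hz.comp (Fin.strictMono_succAbove k)) (fun _ => hzI _)
  have hlast : k.succAbove (Fin.last n) = Fin.last _ := Fin.succAbove_ne_last_last hkl
  have hzero : k.succAbove 0 = 0 := Fin.succAbove_ne_zero_zero hk0
  refine Finset.sum_pos' (fun j _ => ?_) ⟨Fin.last n, Finset.mem_univ _, ?_⟩
  · by_cases hj0 : j = 0
    · subst hj0
      refine mul_nonneg ?_ (hp _).le
      simpa [hzero] using e1.le
    by_cases hjl : j = Fin.last n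
    · subst hjl
      refine mul_nonneg ?_ (hp _).le
      simpa [hlast, hn2] using e0.le
    · have : h ((z ∘ k.succAbove) j) = 0 := hint _
        (fun h => hj0 (Fin.succAbove_right_injective (h.trans hzero.symm)))
        (fun h => hjl (Fin.succAbove_right_injective (h.trans hlast.symm)))
      rw [this]; simp
  · refine mul_pos ?_ (hp _)
    simpa [hlast, hn2] using e0

theorem exists_insert {n : ℕ} (t : Fin (n + 1) → ℝ) (ht : StrictMono t) (m : ℝ)
    (hm : ∀ j, t j ≠ m) (h0 : t 0 < m) (h1 : m < t (Fin.last n)) :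
    ∃ (z : Fin (n + 2) → ℝ) (k : Fin (n + 2)), StrictMono z ∧ k ≠ 0 ∧ k ≠ Fin.last _ ∧
      z k = m ∧ z ∘ k.succAbove = t := by
  classical
  set T : Finset ℝ := insert m (Finset.univ.image t) with hT
  have hcard : T.card = n + 2 := by
    rw [hT, Finset.card_insert_of_notMem (by simpa using hm),
      Finset.card_image_of_injective _ ht.injective]
    simp
  set z := T.orderEmbOfFin hcard with hz
  have hr : Set.range z = ↑T := Finset.range_orderEmbOfFin T hcard
  obtain ⟨k, hk⟩ : m ∈ Set.range z := by rw [hr]; simp [hT]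
  have hzt : z ∘ k.succAbove = t := by
    refine (StrictMono.range_inj (z.strictMono.comp (Fin.strictMono_succAbove k)) ht).mp ?_
    rw [Set.range_comp, Fin.range_succAbove, Set.image_compl_eq_range_diff_image z.injective, hr]
    ext s
    simp only [hT, Finset.coe_insert, Finset.coe_image, Finset.coe_univ, Set.image_univ,
      Set.image_singleton, hk, Set.mem_diff, Set.mem_insert_iff, Set.mem_range,
      Set.mem_singleton_iff]
    constructor
    · rintro ⟨h | h, h'⟩
      · exact absurd h h'
      · exact h
    · rintro ⟨j, rfl⟩
      exact ⟨Or.inr ⟨j, rfl⟩, hm j⟩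
  refine ⟨z, k, z.strictMono, ?_, ?_, hk, hzt⟩
  · rintro rfl
    have := z.monotone (Fin.zero_le ((0 : Fin (n + 2)).succAbove 0))
    rw [hk] at this
    have h2 := congrFun hzt 0
    simp only [Function.comp_apply] at h2
    linarith
  · rintro rfl
    have := z.monotone (Fin.le_last ((Fin.last (n + 1)).succAbove (Fin.last n)))
    rw [hk] at this
    have h2 := congrFun hzt (Fin.last n)
    simp only [Function.comp_apply] at h2
    linarith

/-- Positivity on tuples consecutive in `S` gives positivity on all tuples in `S`. -/
theorem pos_of_consecutive {n : ℕ} (hn : 0 < n) {I : Set ℝ} {ω : Fin n → ℝ → ℝ}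
    (hω : IsPosChebyshev ω I) (g : ℝ → ℝ) (S : Finset ℝ) (hS : ∀ s ∈ S, s ∈ I)
    (hc : ∀ t : Fin (n + 1) → ℝ, StrictMono t → (∀ j, t j ∈ S) →
      (∀ s ∈ S, t 0 < s → s < t (Fin.last n) → ∃ j, t j = s) → 0 < Phi (Fin.snoc ω g) t) :
    ∀ (N : ℕ) (t : Fin (n + 1) → ℝ), StrictMono t → (∀ j, t j ∈ S) →
      (S.filter fun s => t 0 ≤ s ∧ s ≤ t (Fin.last n)).card = N →
      0 < Phi (Fin.snoc ω g) t := by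
  intro N
  induction N using Nat.strong_induction_on with
  | _ N ih =>
  intro t ht htS hN
  by_cases hcons : ∀ s ∈ S, t 0 < s → s < t (Fin.last n) → ∃ j, t j = s
  · exact hc t ht htS hcons
  push Not at hcons
  obtain ⟨m, hmS, h0, h1, hm⟩ := hcons
  obtain ⟨z, k, hz, hk0, hkl, hzk, hzt⟩ := exists_insert t ht m hm h0 h1
  have hzS : ∀ i, z i ∈ S := by
    intro i
    by_cases hik : i = k
    · rw [hik, hzk]; exact hmS
    · obtain ⟨j, rfl⟩ := Fin.exists_succAbove_eq hik
      have := htS j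
      rwa [← hzt] at this
  have hz0 : z 0 = t 0 := by
    rw [← hzt]; simp [Fin.succAbove_ne_zero_zero hk0]
  have hzl : z (Fin.last _) = t (Fin.last n) := by
    rw [← hzt]; simp [Fin.succAbove_ne_last_last hkl]
  rw [← hzt]
  refine Phi_mid_pos hn hω g z hz (fun j => hS _ (hzS j)) k hk0 hkl ?_ ?_
  · refine ih _ ?_ _ (hz.comp Fin.strictMono_succ) (fun j => hzS _) rfl
    rw [← hN]
    apply Finset.card_lt_card
    have hlt : t 0 < z (Fin.succ 0) := by rw [← hz0]; exact hz (Fin.succ_pos 0)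
    refine Finset.ssubset_iff_of_subset ?_ |>.mpr ⟨t 0, ?_, ?_⟩
    · intro s hs
      simp only [Finset.mem_filter, Function.comp_apply, Fin.succ_last, hzl] at hs ⊢
      exact ⟨hs.1, hlt.le.trans hs.2.1, hs.2.2⟩
    · simp only [Finset.mem_filter]
      exact ⟨htS 0, le_rfl, ht.monotone (Fin.zero_le _)⟩
    · simp only [Finset.mem_filter, Function.comp_apply, not_and]
      intro _ h; exact absurd h (not_le.mpr hlt)
  · refine ih _ ?_ _ (hz.comp Fin.strictMono_castSucc) (fun j => hzS _) rfl
    rw [← hN]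
    apply Finset.card_lt_card
    have hlt : z (Fin.castSucc (Fin.last n)) < t (Fin.last n) := by
      rw [← hzl]; exact hz (Fin.castSucc_lt_last _)
    refine Finset.ssubset_iff_of_subset ?_ |>.mpr ⟨t (Fin.last n), ?_, ?_⟩
    · intro s hs
      simp only [Finset.mem_filter, Function.comp_apply, Fin.castSucc_zero, hz0] at hs ⊢
      exact ⟨hs.1, hs.2.1, hs.2.2.trans hlt.le⟩
    · simp only [Finset.mem_filter]
      exact ⟨htS _, ht.monotone (Fin.zero_le _), le_rfl⟩
    · simp only [Finset.mem_filter, Function.comp_apply, not_and]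
      intro _ _ h; exact absurd h (not_le.mpr hlt)

theorem exists_small {n : ℕ} (hn : 0 < n) {I : Set ℝ} (hI : I.OrdConnected)
    {ω : Fin n → ℝ → ℝ} (hω : IsPosChebyshev ω I) (g : ℝ → ℝ)
    (x : Fin (n + 1) → ℝ) (hx : StrictMono x) (hxI : ∀ j, x j ∈ I)
    (hbad : Phi (Fin.snoc ω g) x ≤ 0) (δ : ℝ) (hδ : 0 < δ) :
    ∃ y : Fin (n + 1) → ℝ, StrictMono y ∧ (∀ j, y j ∈ I) ∧ Phi (Fin.snoc ω g) y ≤ 0 ∧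
      x 0 ≤ y 0 ∧ y (Fin.last n) ≤ x (Fin.last n) ∧ y (Fin.last n) - y 0 < δ := by
  classical
  by_contra hcon
  push Not at hcon
  have hn' : (0 : ℝ) < n := by exact_mod_cast hn
  set h : ℝ := δ / (2 * n) with hh
  have hhpos : 0 < h := by positivity
  set L := x (Fin.last n) with hL
  set S : Finset ℝ := (Finset.univ.image x) ∪
    ((Finset.range (⌈(L - x 0) / h⌉₊ + 1)).image fun k : ℕ => x 0 + k * h).filter
      (fun s => s ≤ L) with hS
  have hSb : ∀ s ∈ S, x 0 ≤ s ∧ s ≤ L := by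
    intro s hs
    simp only [hS, Finset.mem_union, Finset.mem_image, Finset.mem_univ, true_and,
      Finset.mem_filter] at hs
    rcases hs with ⟨j, rfl⟩ | ⟨⟨k, _, rfl⟩, hk⟩
    · exact ⟨hx.monotone (Fin.zero_le _), hx.monotone (Fin.le_last _)⟩
    · refine ⟨?_, hk⟩
      have : (0 : ℝ) ≤ k * h := by positivity
      linarith
  have hSI : ∀ s ∈ S, s ∈ I := fun s hs => hI.out (hxI 0) (hxI (Fin.last n)) (hSb s hs)
  have key := pos_of_consecutive hn hω g S hSI ?_ _ x hx
    (fun j => by simp [hS]) rfl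
  · linarith
  intro t ht htS hcons
  have hgap : ∀ j : Fin n, t j.succ - t j.castSucc ≤ h := by
    intro j
    by_contra hlt
    push Not at hlt
    have hb0 := (hSb _ (htS j.castSucc)).1
    have hb1 := (hSb _ (htS j.succ)).2
    set u := (t j.castSucc - x 0) / h with hu
    have hu0 : 0 ≤ u := div_nonneg (by linarith) hhpos.le
    have huh : u * h = t j.castSucc - x 0 := div_mul_cancel₀ _ hhpos.ne'
    set k := ⌊u⌋₊ + 1 with hk
    have hk1 : u < k := by rw [hk]; push_cast; exact Nat.lt_floor_add_one u
    have hk2 : (k : ℝ) ≤ u + 1 := by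
      rw [hk]; push_cast; linarith [Nat.floor_le hu0]
    have hs1 : t j.castSucc < x 0 + k * h := by nlinarith
    have hs2 : x 0 + k * h < t j.succ := by nlinarith
    have hmem : x 0 + k * h ∈ S := by
      simp only [hS, Finset.mem_union, Finset.mem_filter]
      refine Or.inr ⟨Finset.mem_image.mpr ⟨k, ?_, rfl⟩, by linarith⟩
      rw [Finset.mem_range, Nat.lt_succ_iff]
      have : (k : ℝ) ≤ (L - x 0) / h := by
        rw [le_div_iff₀ hhpos]; linarith
      exact_mod_cast this.trans (Nat.le_ceil _)
    obtain ⟨i, hi⟩ := hcons _ hmem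
      (lt_of_le_of_lt (ht.monotone (Fin.zero_le _)) hs1)
      (lt_of_lt_of_le hs2 (ht.monotone (Fin.le_last _)))
    rw [← hi] at hs1 hs2
    have a1 := ht.lt_iff_lt.mp hs1
    have a2 := ht.lt_iff_lt.mp hs2
    simp only [Fin.lt_def, Fin.val_castSucc, Fin.val_succ] at a1 a2
    omega
  have hall : ∀ j : Fin (n + 1), t j - t 0 ≤ (j : ℕ) * h := by
    intro j
    induction j using Fin.induction with
    | zero => simp
    | succ i ih =>
      have := hgap i
      simp only [Fin.val_castSucc, Fin.val_succ] at ih ⊢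
      push_cast
      linarith
  by_contra hneg
  push Not at hneg
  have h1 := hcon t ht (fun j => hSI _ (htS j)) hneg (hSb _ (htS 0)).1 (hSb _ (htS _)).2
  have h2 := hall (Fin.last n)
  have h3 : (n : ℝ) * h = δ / 2 := by rw [hh]; field_simp
  simp only [Fin.val_last] at h2
  linarith

theorem exists_point {n : ℕ} (hn : 0 < n) {I : Set ℝ} (hI : I.OrdConnected)
    {ω : Fin n → ℝ → ℝ} (hω : IsPosChebyshev ω I) (g : ℝ → ℝ)
    (x : Fin (n + 1) → ℝ) (hx : StrictMono x) (hxI : ∀ j, x j ∈ I)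
    (hbad : Phi (Fin.snoc ω g) x ≤ 0) :
    ∃ p ∈ I, ∀ δ > 0, ∃ y : Fin (n + 1) → ℝ, StrictMono y ∧ (∀ j, y j ∈ I) ∧
      Phi (Fin.snoc ω g) y ≤ 0 ∧ y 0 ≤ p ∧ p ≤ y (Fin.last n) ∧ y (Fin.last n) - y 0 < δ := by
  let B := {y : Fin (n + 1) → ℝ // StrictMono y ∧ (∀ j, y j ∈ I) ∧ Phi (Fin.snoc ω g) y ≤ 0}
  have step : ∀ (k : ℕ) (y : B), ∃ y' : B, y.1 0 ≤ y'.1 0 ∧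
      y'.1 (Fin.last n) ≤ y.1 (Fin.last n) ∧
      y'.1 (Fin.last n) - y'.1 0 < 1 / ((k : ℝ) + 1) := by
    intro k y
    obtain ⟨y', h1, h2, h3, h4⟩ := exists_small hn hI hω g y.1 y.2.1 y.2.2.1 y.2.2.2
      (1 / ((k : ℝ) + 1)) (by positivity)
    exact ⟨⟨y', h1, h2, h3⟩, h4⟩
  choose nxt hnxt using step
  let s : ℕ → B := fun k => Nat.rec ⟨x, hx, hxI, hbad⟩ (fun k y => nxt k y) k
  have hs : ∀ k, s (k + 1) = nxt k (s k) := fun k => rfl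
  have hanti : Antitone fun k => Set.Icc ((s k).1 0) ((s k).1 (Fin.last n)) := by
    refine antitone_nat_of_succ_le fun k => ?_
    have := hnxt k (s k)
    rw [← hs] at this
    exact Set.Icc_subset_Icc this.1 this.2.1
  have hle : ∀ k, (s k).1 0 ≤ (s k).1 (Fin.last n) :=
    fun k => (s k).2.1.monotone (Fin.zero_le _)
  have hp := Set.mem_iInter.mp (ciSup_mem_iInter_Icc_of_antitone_Icc hanti hle)
  refine ⟨_, hI.out ((s 0).2.2.1 0) ((s 0).2.2.1 _) (hp 0), fun δ hδ => ?_⟩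
  obtain ⟨k, hk⟩ := exists_nat_one_div_lt hδ
  have h3 := hnxt k (s k)
  rw [← hs] at h3
  exact ⟨(s (k + 1)).1, (s (k + 1)).2.1, (s (k + 1)).2.2.1, (s (k + 1)).2.2.2,
    (hp (k + 1)).1, (hp (k + 1)).2, h3.2.2.trans hk⟩

theorem omegaConvexOn_iff_dinghas_nonneg
    (n : ℕ) (hn : 0 < n) (I : Set ℝ) (hI : I.OrdConnected)
    (hne : ∃ a ∈ I, ∃ b ∈ I, a < b)
    (ω : Fin n → ℝ → ℝ) (ω' : ℝ → ℝ)
    (hω : IsPosChebyshev ω I) (hωs : IsPosChebyshev (Fin.snoc ω ω') I)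
    (f : ℝ → ℝ) :
    OmegaConvexOn ω I f ↔ ∀ p ∈ I, 0 ≤ dinghas ω ω' f I p := by
  constructor
  · intro hf p hp
    unfold dinghas
    refine Filter.le_liminf_of_le (by isBoundedDefault) ?_
    refine Filter.mem_of_superset
      (Filter.mem_iInf_of_mem (1 : ℝ) (Filter.mem_iInf_of_mem (Set.mem_Ioi.mpr one_pos)
        (Filter.mem_principal_self _))) ?_
    rintro x ⟨hx, hxI, -⟩
    have : 0 ≤ divDiff ω ω' f x := div_nonneg (hf x hx hxI) (hωs x hx hxI).le
    exact_mod_cast this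
  · intro hD x hx hxI
    by_contra hneg
    push Not at hneg
    set c := divDiff ω ω' f x with hc
    have hW := hωs x hx hxI
    have hc0 : c < 0 := div_neg_of_neg_of_pos hneg hW
    have hbad : Phi (Fin.snoc ω (fun s => f s - c * ω' s)) x ≤ 0 := by
      rw [Phi_snoc_sub_mul, hc, divDiff, div_mul_cancel₀ _ hW.ne', sub_self]
    obtain ⟨p, hpI, hp⟩ := exists_point hn hI hω _ x hx hxI hbad
    have hlt : (c : EReal) < dinghas ω ω' f I p :=
      lt_of_lt_of_le (by exact_mod_cast hc0) (hD p hpI)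
    unfold dinghas at hlt
    have hev := Filter.eventually_lt_of_lt_liminf hlt
    rw [Filter.eventually_iff, Filter.mem_biInf_of_directed] at hev
    · obtain ⟨δ, hδ, hsub⟩ := hev
      obtain ⟨y, hy, hyI, hyb, h0, h1, h2⟩ := hp δ hδ
      have h3 := (Filter.mem_principal.mp hsub) ⟨hy, hyI, h0, h1, h2⟩
      simp only [Set.mem_setOf_eq, EReal.coe_lt_coe_iff] at h3
      have hWy := hωs y hy hyI
      rw [divDiff, lt_div_iff₀ hWy] at h3
      rw [Phi_snoc_sub_mul] at hyb
      linarith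
    · intro a ha b hb
      refine ⟨min a b, Set.mem_Ioi.mpr (lt_min (Set.mem_Ioi.mp ha) (Set.mem_Ioi.mp hb)), ?_, ?_⟩
      · refine Filter.principal_mono.mpr ?_
        rintro y ⟨h1, h2, h3, h4, h5⟩
        exact ⟨h1, h2, h3, h4, h5.trans_le (min_le_left _ _)⟩
      · refine Filter.principal_mono.mpr ?_
        rintro y ⟨h1, h2, h3, h4, h5⟩
        exact ⟨h1, h2, h3, h4, h5.trans_le (min_le_right _ _)⟩
    · exact ⟨1, Set.mem_Ioi.mpr one_pos⟩
end

section
/- Let I ⊆ ℝ be a nondegenerate interval, let ω = (ω_1,ω_2) be a 2-dimensional positive Chebyshev system over I, and let ω_3 : I → ℝ be such that ω* = (ω_1,ω_2,ω_3) is a 3-dimensional positive Chebyshev system over I. Let (t_1,t_2) ∈ ℝ₊² and f : I → ℝ. Then, for every x, y ∈ I with x < y, there exists p ∈ [x,y] such that [x, (t_2x+t_1y)/(t_1+t_2), y; f]_{ω*} ≥ min{ D̲_{((t_1,t_2),ω*)} f(p), D̲_{((t_2,t_1),ω*)} f(p) }. -/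
/-- The partial sum `t₁ + ⋯ + tⱼ` (empty for `j = 0`, everything for `j = n`). -/
noncomputable def psum {n : ℕ} (t : Fin n → ℝ) (j : Fin (n + 1)) : ℝ :=
  ∑ i ∈ Finset.univ.filter (fun i : Fin n => (i : ℕ) < (j : ℕ)), t i

/-- `f` is `(t,ω)`-convex on `J`:
`Φ_{(ω,f)}(x, x+t₁h, x+(t₁+t₂)h, …, x+(t₁+⋯+tₙ)h) ≥ 0`
for all `x ∈ J` and `h > 0` with `x+(t₁+⋯+tₙ)h ∈ J`. -/
def TOmegaConvexOn {n : ℕ} (ω : Fin n → ℝ → ℝ) (t : Fin n → ℝ) (J : Set ℝ) (f : ℝ → ℝ) : Prop :=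
  ∀ x ∈ J, ∀ h : ℝ, 0 < h → x + psum t (Fin.last n) * h ∈ J →
    0 ≤ Phi (Fin.snoc ω f) (fun j => x + psum t j * h)

/-- The tuple `x, ((T−s₁)x+s₁y)/T, …, ((T−s_{n−1})x+s_{n−1}y)/T, y`
where `sⱼ = t₁+⋯+tⱼ` and `T = sₙ`. -/
noncomputable def jpts {n : ℕ} (t : Fin n → ℝ) (x y : ℝ) : Fin (n + 1) → ℝ :=
  fun j => ((psum t (Fin.last n) - psum t j) * x + psum t j * y) / psum t (Fin.last n)

/-- The lower Dinghas type derivative `D̲_{(t,ω*)} f(p)`: the limit, as `δ → 0⁺`, of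
the infimum of `[x, ((T−s₁)x+s₁y)/T, …, y; f]_{ω*}` over `x,y ∈ I` with `x < y`,
`x ≤ p ≤ y`, `y − x < δ`; realized as a `liminf` (with values in `EReal`). -/
noncomputable def dinghasT {n : ℕ} (ω : Fin n → ℝ → ℝ) (ω' : ℝ → ℝ) (t : Fin n → ℝ)
    (f : ℝ → ℝ) (I : Set ℝ) (p : ℝ) : EReal :=
  Filter.liminf (fun q : ℝ × ℝ => (divDiff ω ω' f (jpts t q.1 q.2) : EReal))
    (⨅ δ ∈ Set.Ioi (0 : ℝ), Filter.principal
      {q : ℝ × ℝ | q.1 ∈ I ∧ q.2 ∈ I ∧ q.1 < q.2 ∧ q.1 ≤ p ∧ p ≤ q.2 ∧ q.2 - q.1 < δ})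

noncomputable def DD (ω : Fin 2 → ℝ → ℝ) (a b : ℝ) : ℝ := ω 0 a * ω 1 b - ω 0 b * ω 1 a

noncomputable def LL (ω : Fin 2 → ℝ → ℝ) (g : ℝ → ℝ) (a b c : ℝ) : ℝ :=
  g a * DD ω b c - g b * DD ω a c + g c * DD ω a b

theorem Phi_eq_LL (ω : Fin 2 → ℝ → ℝ) (g : ℝ → ℝ) (a b c : ℝ) :
    Phi (Fin.snoc ω g) ![a, b, c] = LL ω g a b c := by
  have h0 : (Fin.snoc ω g : Fin 3 → ℝ → ℝ) 0 = ω 0 := rfl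
  have h1 : (Fin.snoc ω g : Fin 3 → ℝ → ℝ) 1 = ω 1 := rfl
  have h2 : (Fin.snoc ω g : Fin 3 → ℝ → ℝ) 2 = g := rfl
  unfold Phi LL DD
  rw [Matrix.det_fin_three]
  simp only [Matrix.of_apply, h0, h1, h2, Matrix.cons_val]
  ring

theorem DD_pos {ω : Fin 2 → ℝ → ℝ} {I : Set ℝ} (hω : IsPosChebyshev ω I) {a b : ℝ}
    (ha : a ∈ I) (hb : b ∈ I) (hab : a < b) : 0 < DD ω a b := by
  have h := hω ![a, b] (by
    intro i j hij
    fin_cases i <;> fin_cases j <;> simp_all) (by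
    intro j
    fin_cases j <;> simp_all)
  unfold Phi at h
  rw [Matrix.det_fin_two] at h
  simpa [DD] using h

theorem LL_pos {ω : Fin 2 → ℝ → ℝ} {ω' : ℝ → ℝ} {I : Set ℝ}
    (hω : IsPosChebyshev (Fin.snoc ω ω') I) {a b c : ℝ}
    (ha : a ∈ I) (hb : b ∈ I) (hc : c ∈ I) (hab : a < b) (hbc : b < c) :
    0 < LL ω ω' a b c := by
  rw [← Phi_eq_LL]
  apply hω ![a, b, c]
  · intro i j hij
    have := hab.trans hbc
    fin_cases i <;> fin_cases j <;> simp_all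
  · intro j
    fin_cases j <;> simp_all

theorem jpts_eq (t₁ t₂ x y : ℝ) (h₁ : 0 < t₁) (h₂ : 0 < t₂) :
    jpts ![t₁, t₂] x y = ![x, x + t₁ / (t₁ + t₂) * (y - x), y] := by
  have hT : t₁ + t₂ ≠ 0 := by positivity
  have p0 : psum ![t₁, t₂] 0 = 0 := by simp [psum]
  have p1 : psum ![t₁, t₂] 1 = t₁ := by
    simp [psum, Finset.sum_filter, Fin.sum_univ_two]
  have p2 : psum ![t₁, t₂] 2 = t₁ + t₂ := by
    simp [psum, Finset.sum_filter, Fin.sum_univ_two]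
  have pl : psum ![t₁, t₂] (Fin.last 2) = t₁ + t₂ := p2
  funext j
  unfold jpts
  rw [pl]
  fin_cases j
  · simp only [Fin.zero_eta, p0, Matrix.cons_val]
    field_simp
    ring
  · simp only [Fin.mk_one, p1, Matrix.cons_val]
    field_simp
    ring
  · simp only [Fin.reduceFinMk, p2, Matrix.cons_val]
    field_simp
    ring

theorem divDiff_le_iff {ω : Fin 2 → ℝ → ℝ} {ω' : ℝ → ℝ} {I : Set ℝ}
    (hω : IsPosChebyshev (Fin.snoc ω ω') I) {a b c : ℝ}
    (ha : a ∈ I) (hb : b ∈ I) (hc : c ∈ I) (hab : a < b) (hbc : b < c) (f : ℝ → ℝ) (k : ℝ) :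
    divDiff ω ω' f ![a, b, c] ≤ k ↔ LL ω (fun x => f x - k * ω' x) a b c ≤ 0 := by
  have h := LL_pos hω ha hb hc hab hbc
  unfold divDiff
  rw [Phi_eq_LL, Phi_eq_LL, div_le_iff₀ h, ← sub_nonpos]
  have : LL ω f a b c - k * LL ω ω' a b c = LL ω (fun x => f x - k * ω' x) a b c := by
    unfold LL; ring
  rw [this]

theorem LL_chain {ω : Fin 2 → ℝ → ℝ} {I : Set ℝ} (hω : IsPosChebyshev ω I) (g : ℝ → ℝ)
    {x a m b y : ℝ} (hx : x ∈ I) (ha : a ∈ I) (hm : m ∈ I) (hb : b ∈ I) (hy : y ∈ I)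
    (h1 : x < a) (h2 : a < m) (h3 : m < b) (h4 : b < y) (h : LL ω g x m y ≤ 0) :
    LL ω g x a m ≤ 0 ∨ LL ω g a m b ≤ 0 ∨ LL ω g m b y ≤ 0 := by
  by_contra! hc
  obtain ⟨c1, c2, c3⟩ := hc
  have d1 := DD_pos hω ha hm h2
  have d2 := DD_pos hω hx hm (h1.trans h2)
  have d3 := DD_pos hω hm hb h3
  have d4 := DD_pos hω hm hy (h3.trans h4)
  have e1 : LL ω g x m b * DD ω a m = LL ω g a m b * DD ω x m + LL ω g x a m * DD ω m b := by
    unfold LL DD; ring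
  have e2 : LL ω g x m y * DD ω m b = LL ω g m b y * DD ω x m + LL ω g x m b * DD ω m y := by
    unfold LL DD; ring
  have q1 : 0 < LL ω g x m b := by
    have : 0 < LL ω g x m b * DD ω a m := by rw [e1]; positivity
    exact pos_of_mul_pos_left this d1.le
  have q2 : 0 < LL ω g x m y := by
    have : 0 < LL ω g x m y * DD ω m b := by rw [e2]; positivity
    exact pos_of_mul_pos_left this d3.le
  linarith

/-- The one-step reduction. -/
theorem LL_step {ω : Fin 2 → ℝ → ℝ} {I : Set ℝ} (hI : I.OrdConnected)
    (hω : IsPosChebyshev ω I) (g : ℝ → ℝ) {s : ℝ} (hs0 : 0 < s) (hs1 : s < 1)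
    {x y : ℝ} (hx : x ∈ I) (hy : y ∈ I) (hxy : x < y)
    (h : LL ω g x (x + s * (y - x)) y ≤ 0) :
    ∃ x' y', x ≤ x' ∧ x' < y' ∧ y' ≤ y ∧ y' - x' ≤ max s (1 - s) * (y - x) ∧
      (LL ω g x' (x' + s * (y' - x')) y' ≤ 0 ∨ LL ω g x' (x' + (1 - s) * (y' - x')) y' ≤ 0) := by
  have hd : 0 < y - x := by linarith
  have hs2 : 0 < 1 - s := by linarith
  set m := x + s * (y - x) with hm
  set a := x + (1 - s) * (m - x) with ha
  set b := m + s * (y - m) with hb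
  have k1 : x < m := by have : 0 < s * (y - x) := by positivity
                        linarith
  have k2 : m < y := by have : 0 < (1 - s) * (y - x) := by positivity
                        linarith
  have k1' : 0 < m - x := by linarith
  have k2' : 0 < y - m := by linarith
  have h1 : x < a := by have : 0 < (1 - s) * (m - x) := by positivity
                        linarith
  have h2 : a < m := by have : 0 < s * (m - x) := by positivity
                        linarith
  have h3 : m < b := by have : 0 < s * (y - m) := by positivity
                        linarith
  have h4 : b < y := by have : 0 < (1 - s) * (y - m) := by positivity
                        linarith
  have hmem : ∀ z, x ≤ z → z ≤ y → z ∈ I := fun z h h' => hI.out hx hy ⟨h, h'⟩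
  have hl : s * (y - x) ≤ max s (1 - s) * (y - x) :=
    mul_le_mul_of_nonneg_right (le_max_left _ _) hd.le
  have hr : (1 - s) * (y - x) ≤ max s (1 - s) * (y - x) :=
    mul_le_mul_of_nonneg_right (le_max_right _ _) hd.le
  rcases LL_chain hω g hx (hmem a (by linarith) (by linarith)) (hmem m (by linarith) (by linarith))
    (hmem b (by linarith) (by linarith)) hy h1 h2 h3 h4 h with c | c | c
  · exact ⟨x, m, le_rfl, k1, k2.le, by linarith, Or.inr c⟩
  · refine ⟨a, b, h1.le, h2.trans h3, h4.le, ?_, Or.inl ?_⟩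
    · have : b - a = s * (y - x) := by rw [hb, ha, hm]; ring
      linarith
    · have : a + s * (b - a) = m := by rw [hb, ha, hm]; ring
      rwa [this]
  · exact ⟨m, y, k1.le, k2, le_rfl, by linarith, Or.inl c⟩

theorem lt_dinghasT {ω : Fin 2 → ℝ → ℝ} {ω' : ℝ → ℝ} {t : Fin 2 → ℝ} {f : ℝ → ℝ} {I : Set ℝ}
    {p k : ℝ} (h : (k : EReal) < dinghasT ω ω' t f I p) :
    ∃ δ > 0, ∀ a ∈ I, ∀ b ∈ I, a < b → a ≤ p → p ≤ b → b - a < δ →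
      k < divDiff ω ω' f (jpts t a b) := by
  have he := Filter.eventually_lt_of_lt_liminf h
  rw [Filter.HasBasis.eventually_iff (Filter.hasBasis_biInf_principal
    (s := fun δ : ℝ => {q : ℝ × ℝ | q.1 ∈ I ∧ q.2 ∈ I ∧ q.1 < q.2 ∧ q.1 ≤ p ∧ p ≤ q.2 ∧
      q.2 - q.1 < δ}) (S := Set.Ioi (0 : ℝ)) ?_ ⟨1, Set.mem_Ioi.2 one_pos⟩)] at he
  · obtain ⟨δ, hδ, H⟩ := he
    refine ⟨δ, hδ, fun a ha b hb hab h1 h2 h3 => ?_⟩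
    have := @H (a, b) ⟨ha, hb, hab, h1, h2, h3⟩
    exact_mod_cast this
  · intro u hu v hv
    refine ⟨min u v, Set.mem_Ioi.2 (lt_min (Set.mem_Ioi.1 hu) (Set.mem_Ioi.1 hv)), ?_, ?_⟩
    · rintro q ⟨h1, h2, h3, h4, h5, h6⟩
      exact ⟨h1, h2, h3, h4, h5, h6.trans_le (min_le_left _ _)⟩
    · rintro q ⟨h1, h2, h3, h4, h5, h6⟩
      exact ⟨h1, h2, h3, h4, h5, h6.trans_le (min_le_right _ _)⟩

/-- **Theorem 9 (mean value inequality, `n = 2`).** For a 2-dimensional positive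
Chebyshev system `ω`, positive `t₁, t₂`, and every `x < y` in `I`, there is
`p ∈ [x,y]` with
`[x, (t₂x+t₁y)/(t₁+t₂), y; f]_{ω*} ≥ min (D̲_{((t₁,t₂),ω*)} f(p), D̲_{((t₂,t₁),ω*)} f(p))`. -/
theorem divDiff_ge_min_dinghasT_at_some_point
    (I : Set ℝ) (hI : I.OrdConnected) (hne : ∃ a ∈ I, ∃ b ∈ I, a < b)
    (ω : Fin 2 → ℝ → ℝ) (ω' : ℝ → ℝ)
    (hω : IsPosChebyshev ω I) (hωs : IsPosChebyshev (Fin.snoc ω ω') I)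
    (t₁ t₂ : ℝ) (ht₁ : 0 < t₁) (ht₂ : 0 < t₂) (f : ℝ → ℝ) :
    ∀ x ∈ I, ∀ y ∈ I, x < y →
      ∃ p ∈ Set.Icc x y,
        min (dinghasT ω ω' ![t₁, t₂] f I p) (dinghasT ω ω' ![t₂, t₁] f I p) ≤
          (divDiff ω ω' f (jpts ![t₁, t₂] x y) : EReal) := by
  intro x hx y hy hxy
  by_contra! hcon
  set k := divDiff ω ω' f (jpts ![t₁, t₂] x y) with hk
  set g : ℝ → ℝ := fun x => f x - k * ω' x with hg
  set s := t₁ / (t₁ + t₂) with hs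
  have hs' : t₂ / (t₂ + t₁) = 1 - s := by rw [hs]; field_simp; ring
  have hs0 : 0 < s := by positivity
  have hs2 : 0 < 1 - s := by rw [← hs']; positivity
  have hmem : ∀ z, x ≤ z → z ≤ y → z ∈ I := fun z h h' => hI.out hx hy ⟨h, h'⟩
  have key : ∀ r : ℝ, 0 < r → 0 < 1 - r → ∀ a b, x ≤ a → a < b → b ≤ y →
      (divDiff ω ω' f ![a, a + r * (b - a), b] ≤ k ↔ LL ω g a (a + r * (b - a)) b ≤ 0) := by
    intro r hr0 hr1 a b h1 h2 h3
    have hd : 0 < b - a := by linarith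
    have q1 : 0 < r * (b - a) := by positivity
    have q2 : 0 < (1 - r) * (b - a) := by positivity
    exact divDiff_le_iff hωs (hmem _ h1 (by linarith)) (hmem _ (by linarith) (by linarith))
      (hmem _ (by linarith) h3) (by linarith) (by linarith) f k
  let P : ℝ × ℝ → Prop := fun q => x ≤ q.1 ∧ q.1 < q.2 ∧ q.2 ≤ y ∧
    (LL ω g q.1 (q.1 + s * (q.2 - q.1)) q.2 ≤ 0 ∨
      LL ω g q.1 (q.1 + (1 - s) * (q.2 - q.1)) q.2 ≤ 0)
  have hP0 : P (x, y) := by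
    refine ⟨le_rfl, hxy, le_rfl, Or.inl ?_⟩
    refine (key s hs0 hs2 x y le_rfl hxy le_rfl).1 ?_
    rw [hk, jpts_eq _ _ _ _ ht₁ ht₂]
  have hstep : ∀ q : {q // P q}, ∃ q' : {q // P q}, q.1.1 ≤ q'.1.1 ∧ q'.1.2 ≤ q.1.2 ∧
      q'.1.2 - q'.1.1 ≤ max s (1 - s) * (q.1.2 - q.1.1) := by
    rintro ⟨⟨a, b⟩, h1, h2, h3, h4⟩
    simp only at h1 h2 h3 h4
    rcases h4 with h4 | h4
    · obtain ⟨a', b', e1, e2, e3, e4, e5⟩ := LL_step hI hω g hs0 (by linarith)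
        (hmem a h1 (by linarith)) (hmem b (by linarith) h3) h2 h4
      exact ⟨⟨(a', b'), h1.trans e1, e2, e3.trans h3, e5⟩, e1, e3, e4⟩
    · obtain ⟨a', b', e1, e2, e3, e4, e5⟩ := LL_step hI hω g hs2 (by linarith)
        (hmem a h1 (by linarith)) (hmem b (by linarith) h3) h2 h4
      rw [sub_sub_cancel] at e4 e5
      exact ⟨⟨(a', b'), h1.trans e1, e2, e3.trans h3, e5.symm⟩, e1, e3, by rwa [max_comm]⟩
  choose F hF1 hF2 hF3 using hstep
  let u : ℕ → {q // P q} := fun n => F^[n] ⟨(x, y), hP0⟩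
  have hu : ∀ n, u (n + 1) = F (u n) := fun n => Function.iterate_succ_apply' F n _
  have hmono : Monotone fun n => (u n).1.1 :=
    monotone_nat_of_le_succ fun n => by rw [hu]; exact hF1 _
  have hanti : Antitone fun n => (u n).1.2 :=
    antitone_nat_of_succ_le fun n => by rw [hu]; exact hF2 _
  have hle : ∀ n, (u n).1.1 ≤ (u n).1.2 := fun n => (u n).2.2.1.le
  have hp := hmono.ciSup_mem_iInter_Icc_of_antitone hanti hle
  set p := ⨆ n, (u n).1.1 with hpdef
  rw [Set.mem_iInter] at hp
  have hr0 : 0 ≤ max s (1 - s) := hs0.le.trans (le_max_left _ _)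
  have hr1 : max s (1 - s) < 1 := max_lt (by linarith) (by linarith)
  have hlen : ∀ n, (u n).1.2 - (u n).1.1 ≤ max s (1 - s) ^ n * (y - x) := by
    intro n
    induction n with
    | zero => simp [u]
    | succ n ih =>
      rw [hu]
      calc _ ≤ _ := hF3 (u n)
        _ ≤ max s (1 - s) * (max s (1 - s) ^ n * (y - x)) := mul_le_mul_of_nonneg_left ih hr0
        _ = _ := by ring
  have hlim : Filter.Tendsto (fun n => max s (1 - s) ^ n * (y - x)) Filter.atTop (nhds 0) := by
    simpa using (tendsto_pow_atTop_nhds_zero_of_lt_one hr0 hr1).mul_const (y - x)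
  have hpxy : p ∈ Set.Icc x y := hp 0
  have hc := lt_min_iff.1 (hcon p hpxy)
  obtain ⟨δ₁, hδ₁, H₁⟩ := lt_dinghasT hc.1
  obtain ⟨δ₂, hδ₂, H₂⟩ := lt_dinghasT hc.2
  obtain ⟨n, hn⟩ := (hlim.eventually (gt_mem_nhds (lt_min hδ₁ hδ₂))).exists
  have hn' := (hlen n).trans_lt hn
  obtain ⟨w1, w2, w3, w4⟩ := (u n).2
  have m1 := hmem _ w1 (by linarith)
  have m2 := hmem _ (by linarith) w3
  have hpn := hp n
  rcases w4 with w | w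
  · have := H₁ _ m1 _ m2 w2 hpn.1 hpn.2 (hn'.trans_le (min_le_left _ _))
    rw [jpts_eq _ _ _ _ ht₁ ht₂] at this
    exact absurd ((key s hs0 hs2 _ _ w1 w2 w3).2 w) (not_le.2 this)
  · have := H₂ _ m1 _ m2 w2 hpn.1 hpn.2 (hn'.trans_le (min_le_right _ _))
    rw [jpts_eq _ _ _ _ ht₂ ht₁, hs'] at this
    exact absurd ((key (1 - s) hs2 (by linarith) _ _ w1 w2 w3).2 w) (not_le.2 this)
end

section
/- Let I ⊆ ℝ be a nondegenerate interval, let ω = (ω_1,ω_2) be a 2-dimensional positive Chebyshev system over I, and let ω_3 : I → ℝ be such that ω* = (ω_1,ω_2,ω_3) is a 3-dimensional positive Chebyshev system over I. Let (t_1,t_2) ∈ ℝ₊². Then a function f : I → ℝ is symmetrically ((t_1,t_2),ω)-convex on I if and only if D̲_{((t_1,t_2),ω*)} f(p) ≥ 0 and D̲_{((t_2,t_1),ω*)} f(p) ≥ 0 for all p ∈ I. -/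
/-- The `2 × 2` determinant. -/
noncomputable def dgW (ω : Fin 2 → ℝ → ℝ) (u v : ℝ) : ℝ := ω 0 u * ω 1 v - ω 1 u * ω 0 v

/-- The `3 × 3` determinant, expanded along the last row. -/
noncomputable def dgE (ω : Fin 2 → ℝ → ℝ) (g : ℝ → ℝ) (x m y : ℝ) : ℝ :=
  dgW ω x m * g y - dgW ω x y * g m + dgW ω m y * g x

lemma dg_phi (ω : Fin 2 → ℝ → ℝ) (g : ℝ → ℝ) (z : Fin 3 → ℝ) :
    Phi (Fin.snoc ω g : Fin 3 → ℝ → ℝ) z = dgE ω g (z 0) (z 1) (z 2) := by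
  have key : ∀ w : Fin 3 → ℝ → ℝ, Phi w z = dgE ![w 0, w 1] (w 2) (z 0) (z 1) (z 2) := by
    intro w
    simp only [Phi, Matrix.det_fin_three, Matrix.of_apply, dgE, dgW, Matrix.cons_val_zero,
      Matrix.cons_val_one]
    ring
  have hω : ![ω 0, ω 1] = ω := by
    ext i; fin_cases i <;> rfl
  refine (key (Fin.snoc ω g : Fin 3 → ℝ → ℝ)).trans ?_
  change dgE ![ω 0, ω 1] g _ _ _ = _
  rw [hω]

lemma dg_psum (a b : ℝ) : psum ![a, b] 0 = 0 ∧ psum ![a, b] 1 = a ∧ psum ![a, b] 2 = a + b := by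
  refine ⟨?_, ?_, ?_⟩ <;> simp [psum, Finset.sum_filter, Fin.sum_univ_two]

lemma dg_W_pos {I : Set ℝ} {ω : Fin 2 → ℝ → ℝ} (hω : IsPosChebyshev ω I) {u v : ℝ}
    (hu : u ∈ I) (hv : v ∈ I) (huv : u < v) : 0 < dgW ω u v := by
  have := hω ![u, v] (by
    intro i j hij; fin_cases i <;> fin_cases j <;> simp_all) (by
    intro j; fin_cases j <;> simp_all)
  simp only [Phi, Matrix.det_fin_two, Matrix.of_apply] at this
  simp at this
  simp only [dgW]; linarith

lemma dg_E_pos {I : Set ℝ} {ω : Fin 2 → ℝ → ℝ} {ω' : ℝ → ℝ}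
    (hωs : IsPosChebyshev (Fin.snoc ω ω' : Fin 3 → ℝ → ℝ) I) {x m y : ℝ}
    (hx : x ∈ I) (hm : m ∈ I) (hy : y ∈ I) (h1 : x < m) (h2 : m < y) : 0 < dgE ω ω' x m y := by
  have := hωs ![x, m, y] (by
    intro i j hij
    fin_cases i <;> fin_cases j <;> simp_all
    exact h1.trans h2) (by
    intro j; fin_cases j <;> simp_all)
  rw [dg_phi] at this
  simpa using this

lemma dg_divDiff (ω : Fin 2 → ℝ → ℝ) (ω' f : ℝ → ℝ) {a b : ℝ} (ha : 0 < a) (hb : 0 < b)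
    (x y : ℝ) : divDiff ω ω' f (jpts ![a, b] x y) =
      dgE ω f x (x + a / (a + b) * (y - x)) y / dgE ω ω' x (x + a / (a + b) * (y - x)) y := by
  obtain ⟨p0, p1, p2⟩ := dg_psum a b
  have hl : psum ![a, b] (Fin.last 2) = a + b := p2
  have hab : a + b ≠ 0 := by positivity
  have e0 : jpts ![a, b] x y 0 = x := by
    simp only [jpts, hl, p0]; field_simp; ring
  have e1 : jpts ![a, b] x y 1 = x + a / (a + b) * (y - x) := by
    simp only [jpts, hl, p1]; field_simp; ring
  have e2 : jpts ![a, b] x y 2 = y := by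
    simp only [jpts, hl, p2]; field_simp; ring
  unfold divDiff
  rw [dg_phi, dg_phi, e0, e1, e2]

lemma dg_conv (I : Set ℝ) (ω : Fin 2 → ℝ → ℝ) (f : ℝ → ℝ) {a b : ℝ} (ha : 0 < a) (hb : 0 < b) :
    TOmegaConvexOn ω ![a, b] I f ↔ ∀ x ∈ I, ∀ y ∈ I, x < y →
      0 ≤ dgE ω f x (x + a / (a + b) * (y - x)) y := by
  obtain ⟨p0, p1, p2⟩ := dg_psum a b
  have hl : psum ![a, b] (Fin.last 2) = a + b := p2
  have hab : 0 < a + b := by positivity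
  unfold TOmegaConvexOn
  constructor
  · intro h x hx y hy hxy
    have hh := h x hx ((y - x) / (a + b)) (by apply div_pos <;> linarith) (by
      rw [hl, mul_div_cancel₀ _ hab.ne']; simpa using hy)
    rw [dg_phi] at hh
    simp only [p0, p1, p2] at hh
    convert hh using 1
    congr 1 <;> field_simp <;> ring
  · intro h x hx k hk hy
    have hh := h x hx _ hy (by rw [hl]; nlinarith [mul_pos hab hk])
    rw [dg_phi]
    simp only [p0, p1, p2]
    rw [hl] at hh
    convert hh using 1
    congr 1 <;> field_simp <;> ring

lemma dg_filter (I : Set ℝ) (p : ℝ) (S : Set (ℝ × ℝ)) :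
    S ∈ (⨅ δ ∈ Set.Ioi (0 : ℝ), Filter.principal
      {q : ℝ × ℝ | q.1 ∈ I ∧ q.2 ∈ I ∧ q.1 < q.2 ∧ q.1 ≤ p ∧ p ≤ q.2 ∧ q.2 - q.1 < δ}) ↔
    ∃ δ > 0, ∀ x ∈ I, ∀ y ∈ I, x < y → x ≤ p → p ≤ y → y - x < δ → (x, y) ∈ S := by
  rw [Filter.mem_biInf_of_directed]
  · simp only [Filter.mem_principal, Set.mem_Ioi]
    constructor
    · rintro ⟨δ, hδ, h⟩
      exact ⟨δ, hδ, fun x hx y hy h1 h2 h3 h4 => h ⟨hx, hy, h1, h2, h3, h4⟩⟩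
    · rintro ⟨δ, hδ, h⟩
      exact ⟨δ, hδ, fun q ⟨hx, hy, h1, h2, h3, h4⟩ => h q.1 hx q.2 hy h1 h2 h3 h4⟩
  · intro u hu v hv
    refine ⟨min u v, Set.mem_Ioi.2 (lt_min hu hv), ?_, ?_⟩
    · exact Filter.principal_mono.2 fun q ⟨hx, hy, h1, h2, h3, h4⟩ =>
        ⟨hx, hy, h1, h2, h3, h4.trans_le (min_le_left _ _)⟩
    · exact Filter.principal_mono.2 fun q ⟨hx, hy, h1, h2, h3, h4⟩ =>
        ⟨hx, hy, h1, h2, h3, h4.trans_le (min_le_right _ _)⟩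
  · exact ⟨1, Set.mem_Ioi.2 one_pos⟩

lemma dg_mid {x y a b : ℝ} (ha : 0 < a) (hb : 0 < b) (hxy : x < y) :
    x < x + a / (a + b) * (y - x) ∧ x + a / (a + b) * (y - x) < y := by
  have h1 : a / (a + b) < 1 := by rw [div_lt_one] <;> linarith
  have h0 : 0 < a / (a + b) := by positivity
  constructor <;> nlinarith

/-- Convexity implies nonnegativity of the lower derivative. -/
lemma dg_easy {I : Set ℝ} (hI : I.OrdConnected) {ω : Fin 2 → ℝ → ℝ} {ω' : ℝ → ℝ}
    (hωs : IsPosChebyshev (Fin.snoc ω ω' : Fin 3 → ℝ → ℝ) I) {a b : ℝ} (ha : 0 < a) (hb : 0 < b)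
    {f : ℝ → ℝ} (h : TOmegaConvexOn ω ![a, b] I f) (p : ℝ) :
    0 ≤ dinghasT ω ω' ![a, b] f I p := by
  rw [dg_conv I ω f ha hb] at h
  refine Filter.le_liminf_of_le (by isBoundedDefault) ?_
  rw [Filter.Eventually, dg_filter]
  refine ⟨1, one_pos, fun x hx y hy hxy _ _ _ => ?_⟩
  obtain ⟨m1, m2⟩ := dg_mid ha hb hxy
  have := dg_E_pos hωs hx (hI.out hx hy ⟨m1.le, m2.le⟩) hy m1 m2
  simp only [Set.mem_ofPred_eq, dg_divDiff ω ω' f ha hb]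
  exact_mod_cast div_nonneg (h x hx y hy hxy) this.le

lemma dg_local {I : Set ℝ} {ω : Fin 2 → ℝ → ℝ} {ω' f : ℝ → ℝ} {a b : ℝ} (ha : 0 < a) (hb : 0 < b)
    {p c : ℝ} (hc : c < 0) (h : 0 ≤ dinghasT ω ω' ![a, b] f I p) :
    ∃ δ > 0, ∀ x ∈ I, ∀ y ∈ I, x < y → x ≤ p → p ≤ y → y - x < δ →
      c < dgE ω f x (x + a / (a + b) * (y - x)) y / dgE ω ω' x (x + a / (a + b) * (y - x)) y := by
  have hc' : (c : EReal) < dinghasT ω ω' ![a, b] f I p :=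
    lt_of_lt_of_le (by exact_mod_cast hc) h
  have := Filter.eventually_lt_of_lt_liminf hc' (by isBoundedDefault)
  rw [Filter.Eventually, dg_filter] at this
  simpa only [Set.mem_ofPred_eq, dg_divDiff ω ω' f ha hb, EReal.coe_lt_coe_iff] using this

/-- One of the three subtriples inherits negativity. -/
lemma dg_split {I : Set ℝ} {ω : Fin 2 → ℝ → ℝ} (hω : IsPosChebyshev ω I) {g : ℝ → ℝ}
    {x u m v y : ℝ} (hx : x ∈ I) (hu : u ∈ I) (hm : m ∈ I) (hv : v ∈ I) (hy : y ∈ I)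
    (h1 : x < u) (h2 : u < m) (h3 : m < v) (h4 : v < y) (hneg : dgE ω g x m y < 0) :
    dgE ω g x u m < 0 ∨ dgE ω g u m v < 0 ∨ dgE ω g m v y < 0 := by
  by_contra! hcon
  obtain ⟨c1, c2, c3⟩ := hcon
  have w1 := dg_W_pos hω hm hv h3
  have w2 := dg_W_pos hω hx hm (h1.trans h2)
  have w3 := dg_W_pos hω hu hm h2
  have w4 := dg_W_pos hω hm hy (h3.trans h4)
  have i1 : dgW ω m v * dgE ω g x u m + dgW ω x m * dgE ω g u m v
      = dgW ω u m * dgE ω g x m v := by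
    simp only [dgE, dgW]; ring
  have i2 : dgW ω m y * dgE ω g x m v + dgW ω x m * dgE ω g m v y
      = dgW ω m v * dgE ω g x m y := by
    simp only [dgE, dgW]; ring
  have j1 : 0 ≤ dgE ω g x m v := by
    refine nonneg_of_mul_nonneg_right (b := dgE ω g x m v) ?_ w3
    rw [← i1]; positivity
  have j2 : 0 ≤ dgE ω g x m y := by
    refine nonneg_of_mul_nonneg_right (b := dgE ω g x m y) ?_ w1
    rw [← i2]; positivity
  linarith

/-- The set of bad pairs. -/
def dgBad (I : Set ℝ) (ω : Fin 2 → ℝ → ℝ) (g : ℝ → ℝ) (l : ℝ) (q : ℝ × ℝ) : Prop :=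
  q.1 ∈ I ∧ q.2 ∈ I ∧ q.1 < q.2 ∧ (dgE ω g q.1 (q.1 + l * (q.2 - q.1)) q.2 < 0 ∨
    dgE ω g q.1 (q.1 + (1 - l) * (q.2 - q.1)) q.2 < 0)

lemma dg_step_aux {I : Set ℝ} (hI : I.OrdConnected) {ω : Fin 2 → ℝ → ℝ}
    (hω : IsPosChebyshev ω I) {g : ℝ → ℝ} {l : ℝ} (h0 : 0 < l) (h1 : l < 1) {x y : ℝ}
    (hx : x ∈ I) (hy : y ∈ I) (hxy : x < y) (hneg : dgE ω g x (x + l * (y - x)) y < 0) :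
    ∃ q, dgBad I ω g l q ∧ x ≤ q.1 ∧ q.2 ≤ y ∧ q.2 - q.1 ≤ max l (1 - l) * (y - x) := by
  have hd : 0 < y - x := by linarith
  have hl : 0 < 1 - l := by linarith
  have k1 : 0 < l * (1 - l) * (y - x) := by positivity
  have k2 : 0 < l * l * (y - x) := by positivity
  have k3 : 0 < (1 - l) * (1 - l) * (y - x) := by positivity
  have o1 : x < x + l * (1 - l) * (y - x) := by linarith
  have o2 : x + l * (1 - l) * (y - x) < x + l * (y - x) := by nlinarith
  have o3 : x + l * (y - x) < x + l * (2 - l) * (y - x) := by nlinarith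
  have o4 : x + l * (2 - l) * (y - x) < y := by nlinarith
  have hu := hI.out hx hy ⟨o1.le, by linarith⟩
  have hm : x + l * (y - x) ∈ I := hI.out hx hy ⟨by linarith, by linarith⟩
  have hv : x + l * (2 - l) * (y - x) ∈ I := hI.out hx hy ⟨by linarith, o4.le⟩
  have r1 : l * (y - x) ≤ max l (1 - l) * (y - x) :=
    mul_le_mul_of_nonneg_right (le_max_left _ _) hd.le
  have r2 : (1 - l) * (y - x) ≤ max l (1 - l) * (y - x) :=
    mul_le_mul_of_nonneg_right (le_max_right _ _) hd.le
  rcases dg_split hω hx hu hm hv hy o1 o2 o3 o4 hneg with h | h | h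
  · refine ⟨(x, x + l * (y - x)), ⟨hx, hm, o1.trans o2, Or.inr ?_⟩, le_rfl, ?_, ?_⟩
    · convert h using 2
      ring
    · simp only; linarith
    · simp only; linarith
  · refine ⟨(x + l * (1 - l) * (y - x), x + l * (2 - l) * (y - x)),
      ⟨hu, hv, o2.trans o3, Or.inl ?_⟩, o1.le, o4.le, ?_⟩
    · convert h using 2
      ring
    · simp only; linarith
  · refine ⟨(x + l * (y - x), y), ⟨hm, hy, o3.trans o4, Or.inl ?_⟩, ?_, le_rfl, ?_⟩
    · convert h using 2
      ring
    · simp only; linarith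
    · simp only; linarith

lemma dg_step {I : Set ℝ} (hI : I.OrdConnected) {ω : Fin 2 → ℝ → ℝ}
    (hω : IsPosChebyshev ω I) {g : ℝ → ℝ} {l : ℝ} (h0 : 0 < l) (h1 : l < 1) (q : ℝ × ℝ)
    (hq : dgBad I ω g l q) :
    ∃ q', dgBad I ω g l q' ∧ q.1 ≤ q'.1 ∧ q'.2 ≤ q.2 ∧
      q'.2 - q'.1 ≤ max l (1 - l) * (q.2 - q.1) := by
  obtain ⟨hx, hy, hxy, h | h⟩ := hq
  · exact dg_step_aux hI hω h0 h1 hx hy hxy h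
  · obtain ⟨q', hb, a1, a2, a3⟩ :=
      dg_step_aux hI hω (l := 1 - l) (by linarith) (by linarith) hx hy hxy h
    refine ⟨q', ⟨hb.1, hb.2.1, hb.2.2.1, ?_⟩, a1, a2, ?_⟩
    · have := hb.2.2.2
      rw [sub_sub_cancel] at this
      exact this.symm
    · rwa [sub_sub_cancel, max_comm] at a3

/-- Nested intervals: a bad pair yields a point with arbitrarily short bad pairs around it. -/
lemma dg_nested {I : Set ℝ} (hI : I.OrdConnected) {ω : Fin 2 → ℝ → ℝ}
    (hω : IsPosChebyshev ω I) {g : ℝ → ℝ} {l : ℝ} (h0 : 0 < l) (h1 : l < 1) (q : ℝ × ℝ)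
    (hq : dgBad I ω g l q) :
    ∃ p ∈ I, ∀ δ > 0, ∃ q', dgBad I ω g l q' ∧ q'.1 ≤ p ∧ p ≤ q'.2 ∧ q'.2 - q'.1 < δ := by
  choose! F hF using dg_step hI hω (g := g) h0 h1
  let s : ℕ → ℝ × ℝ := fun n => F^[n] q
  have hs : ∀ n, s (n + 1) = F (s n) := fun n => Function.iterate_succ_apply' F n q
  have hb : ∀ n, dgBad I ω g l (s n) := by
    intro n
    induction n with
    | zero => exact hq
    | succ n ih => rw [hs]; exact (hF _ ih).1
  have hmono : Monotone fun n => (s n).1 :=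
    monotone_nat_of_le_succ fun n => by rw [hs]; exact (hF _ (hb n)).2.1
  have hanti : Antitone fun n => (s n).2 :=
    antitone_nat_of_succ_le fun n => by rw [hs]; exact (hF _ (hb n)).2.2.1
  have hr0 : 0 ≤ max l (1 - l) := h0.le.trans (le_max_left _ _)
  have hr1 : max l (1 - l) < 1 := max_lt h1 (by linarith)
  have hlen : ∀ n, (s n).2 - (s n).1 ≤ max l (1 - l) ^ n * (q.2 - q.1) := by
    intro n
    induction n with
    | zero => simp [s]
    | succ n ih =>
      rw [hs, pow_succ']
      refine (hF _ (hb n)).2.2.2.trans ?_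
      rw [mul_assoc]
      exact mul_le_mul_of_nonneg_left ih hr0
  have hle : ∀ m n, (s m).1 ≤ (s n).2 := fun m n =>
    (hmono (le_max_left m n)).trans ((hb (max m n)).2.2.1.le.trans (hanti (le_max_right m n)))
  have hbdd : BddAbove (Set.range fun n => (s n).1) :=
    ⟨(s 0).2, by rintro _ ⟨n, rfl⟩; exact hle n 0⟩
  have hlow : ∀ n, (s n).1 ≤ ⨆ n, (s n).1 := fun n => le_ciSup hbdd n
  have hup : ∀ n, ⨆ n, (s n).1 ≤ (s n).2 := fun n => ciSup_le fun m => hle m n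
  refine ⟨⨆ n, (s n).1, hI.out hq.1 hq.2.1 ⟨hlow 0, hup 0⟩, fun δ hδ => ?_⟩
  have ht : Filter.Tendsto (fun n => max l (1 - l) ^ n * (q.2 - q.1)) Filter.atTop (nhds 0) := by
    simpa using (tendsto_pow_atTop_nhds_zero_of_lt_one hr0 hr1).mul_const (q.2 - q.1)
  obtain ⟨n, hn⟩ := (ht.eventually (gt_mem_nhds hδ)).exists
  exact ⟨s n, hb n, hlow n, hup n, (hlen n).trans_lt hn⟩

lemma dg_E_sub (ω : Fin 2 → ℝ → ℝ) (f ω' : ℝ → ℝ) (c x m y : ℝ) :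
    dgE ω (fun z => f z - c * ω' z) x m y = dgE ω f x m y - c * dgE ω ω' x m y := by
  simp only [dgE]; ring

lemma dg_hard {I : Set ℝ} (hI : I.OrdConnected) {ω : Fin 2 → ℝ → ℝ} {ω' : ℝ → ℝ}
    (hω : IsPosChebyshev ω I) (hωs : IsPosChebyshev (Fin.snoc ω ω' : Fin 3 → ℝ → ℝ) I)
    {a b : ℝ} (ha : 0 < a) (hb : 0 < b) {f : ℝ → ℝ}
    (h : ∀ p ∈ I, 0 ≤ dinghasT ω ω' ![a, b] f I p ∧ 0 ≤ dinghasT ω ω' ![b, a] f I p) :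
    TOmegaConvexOn ω ![a, b] I f := by
  rw [dg_conv I ω f ha hb]
  intro x hx y hy hxy
  by_contra! hneg
  have hE : ∀ {a b : ℝ}, 0 < a → 0 < b → ∀ x ∈ I, ∀ y ∈ I, x < y →
      0 < dgE ω ω' x (x + a / (a + b) * (y - x)) y := by
    intro a b ha hb x hx y hy hxy
    obtain ⟨m1, m2⟩ := dg_mid ha hb hxy
    exact dg_E_pos hωs hx (hI.out hx hy ⟨m1.le, m2.le⟩) hy m1 m2
  have hE0 := hE ha hb x hx y hy hxy
  obtain ⟨c, hc1, hc2⟩ := exists_between (div_neg_of_neg_of_pos hneg hE0)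
  have hl1 : a / (a + b) < 1 := by rw [div_lt_one] <;> linarith
  have hl0 : 0 < a / (a + b) := by positivity
  have hl : 1 - a / (a + b) = b / (b + a) := by field_simp; ring
  have hbad : dgBad I ω (fun z => f z - c * ω' z) (a / (a + b)) (x, y) := by
    refine ⟨hx, hy, hxy, Or.inl ?_⟩
    rw [dg_E_sub]
    have := (div_lt_iff₀ hE0).1 hc1
    simp only; linarith
  obtain ⟨p, hp, hpδ⟩ := dg_nested hI hω hl0 hl1 _ hbad
  obtain ⟨δ₁, hδ₁, H₁⟩ := dg_local ha hb hc2 (h p hp).1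
  obtain ⟨δ₂, hδ₂, H₂⟩ := dg_local hb ha hc2 (h p hp).2
  obtain ⟨q, ⟨q1, q2, q3, q4⟩, q5, q6, q7⟩ := hpδ (min δ₁ δ₂) (lt_min hδ₁ hδ₂)
  rw [hl, dg_E_sub, dg_E_sub] at q4
  rcases q4 with q4 | q4
  · have := H₁ _ q1 _ q2 q3 q5 q6 (q7.trans_le (min_le_left _ _))
    rw [lt_div_iff₀ (hE ha hb _ q1 _ q2 q3)] at this
    linarith
  · have := H₂ _ q1 _ q2 q3 q5 q6 (q7.trans_le (min_le_right _ _))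
    rw [lt_div_iff₀ (hE hb ha _ q1 _ q2 q3)] at this
    linarith

/-- **Corollary 10.** For `n = 2` and positive `t₁, t₂`, the function `f` is
symmetrically `((t₁,t₂),ω)`-convex on `I` (i.e. both `((t₁,t₂),ω)`- and
`((t₂,t₁),ω)`-convex) if and only if both lower Dinghas type derivatives
`D̲_{((t₁,t₂),ω*)} f(p)` and `D̲_{((t₂,t₁),ω*)} f(p)` are nonnegative at every
`p ∈ I`. -/
theorem symmetrically_tOmegaConvexOn_iff_dinghasT_nonneg
    (I : Set ℝ) (hI : I.OrdConnected) (hne : ∃ a ∈ I, ∃ b ∈ I, a < b)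
    (ω : Fin 2 → ℝ → ℝ) (ω' : ℝ → ℝ)
    (hω : IsPosChebyshev ω I) (hωs : IsPosChebyshev (Fin.snoc ω ω') I)
    (t₁ t₂ : ℝ) (ht₁ : 0 < t₁) (ht₂ : 0 < t₂) (f : ℝ → ℝ) :
    (TOmegaConvexOn ω ![t₁, t₂] I f ∧ TOmegaConvexOn ω ![t₂, t₁] I f) ↔
      ∀ p ∈ I, 0 ≤ dinghasT ω ω' ![t₁, t₂] f I p ∧
        0 ≤ dinghasT ω ω' ![t₂, t₁] f I p := by
  constructor
  · rintro ⟨h1, h2⟩ p _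
    exact ⟨dg_easy hI hωs ht₁ ht₂ h1 p, dg_easy hI hωs ht₂ ht₁ h2 p⟩
  · intro h
    exact ⟨dg_hard hI hω hωs ht₁ ht₂ h, dg_hard hI hω hωs ht₂ ht₁ fun p hp => (h p hp).symm⟩
end

section
/- Let I ⊆ ℝ be a nondegenerate interval, let ω = (ω_1,ω_2) be a 2-dimensional positive Chebyshev system over I, and let (t_1,t_2) ∈ ℝ₊². A function f : I → ℝ is symmetrically ((t_1,t_2),ω)-convex on I if and only if, for every p ∈ I, there exists a neighborhood U of p such that f is symmetrically ((t_1,t_2),ω)-convex on U ∩ I; that is, symmetric ((t_1,t_2),ω)-convexity is a localizable property. -/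
/-- The three-point determinant in explicit form. -/
noncomputable def D3 (ω : Fin 2 → ℝ → ℝ) (f : ℝ → ℝ) (x y z : ℝ) : ℝ :=
  f x * (ω 0 y * ω 1 z - ω 0 z * ω 1 y) - f y * (ω 0 x * ω 1 z - ω 0 z * ω 1 x)
    + f z * (ω 0 x * ω 1 y - ω 0 y * ω 1 x)

theorem tOmega_iff (ω : Fin 2 → ℝ → ℝ) (s t : ℝ) (J : Set ℝ) (f : ℝ → ℝ) :
    TOmegaConvexOn ω ![s, t] J f ↔
      ∀ x ∈ J, ∀ h : ℝ, 0 < h → x + (s + t) * h ∈ J →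
        0 ≤ D3 ω f x (x + s * h) (x + (s + t) * h) := by
  have e0 : psum ![s, t] 0 = 0 := by simp [psum]
  have e1 : psum ![s, t] 1 = s := by
    simp [psum, Finset.sum_filter, Fin.sum_univ_two]
  have e2 : psum ![s, t] 2 = s + t := by
    simp [psum, Finset.sum_filter, Fin.sum_univ_two]
  have el : psum ![s, t] (Fin.last 2) = s + t := e2
  have key : ∀ x h, Phi (Fin.snoc ω f) (fun j => x + psum ![s, t] j * h)
      = D3 ω f x (x + s * h) (x + (s + t) * h) := by
    intro x h
    have s0 : (Fin.snoc ω f : Fin 3 → ℝ → ℝ) 0 = ω 0 := rfl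
    have s1 : (Fin.snoc ω f : Fin 3 → ℝ → ℝ) 1 = ω 1 := rfl
    have s2 : (Fin.snoc ω f : Fin 3 → ℝ → ℝ) 2 = f := rfl
    unfold Phi D3
    rw [Matrix.det_fin_three]
    simp only [Matrix.of_apply, s0, s1, s2, e0, e1, e2, zero_mul, add_zero]
    ring
  unfold TOmegaConvexOn
  simp only [el, key]

theorem cheb_pos {ω : Fin 2 → ℝ → ℝ} {I : Set ℝ} (hω : IsPosChebyshev ω I) {x y : ℝ}
    (hx : x ∈ I) (hy : y ∈ I) (hxy : x < y) : 0 < ω 0 x * ω 1 y - ω 0 y * ω 1 x := by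
  have h := hω ![x, y] (by
    intro i j hij
    fin_cases i <;> fin_cases j <;> simp_all) (by
    intro j
    fin_cases j <;> simp [hx, hy])
  unfold Phi at h
  rw [Matrix.det_fin_two] at h
  simpa using h

/-- Dropping interior nodes from a chain of five points with nonnegative consecutive
determinants. -/
theorem chain {ω : Fin 2 → ℝ → ℝ} {I : Set ℝ} (hω : IsPosChebyshev ω I) (f : ℝ → ℝ)
    {a b c d e : ℝ} (ha : a ∈ I) (hb : b ∈ I) (hc : c ∈ I) (hd : d ∈ I) (he : e ∈ I)
    (hab : a < b) (hbc : b < c) (hcd : c < d) (hde : d < e)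
    (h1 : 0 ≤ D3 ω f a b c) (h2 : 0 ≤ D3 ω f b c d) (h3 : 0 ≤ D3 ω f c d e) :
    0 ≤ D3 ω f a c e := by
  have wac := cheb_pos hω ha hc (hab.trans hbc)
  have wbc := cheb_pos hω hb hc hbc
  have wcd := cheb_pos hω hc hd hcd
  have wce := cheb_pos hω hc he (hcd.trans hde)
  have i1 : 0 ≤ D3 ω f a c d := by
    refine nonneg_of_mul_nonneg_left (b := ω 0 b * ω 1 c - ω 0 c * ω 1 b) ?_ wbc
    have := add_nonneg (mul_nonneg h2 wac.le) (mul_nonneg h1 wcd.le)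
    refine this.trans_eq ?_
    unfold D3
    ring
  refine nonneg_of_mul_nonneg_left (b := ω 0 c * ω 1 d - ω 0 d * ω 1 c) ?_ wcd
  have := add_nonneg (mul_nonneg i1 wce.le) (mul_nonneg h3 wac.le)
  refine this.trans_eq ?_
  unfold D3
  ring

/-- One refinement step. -/
theorem refine_step {ω : Fin 2 → ℝ → ℝ} {I : Set ℝ} (hI : I.OrdConnected)
    (hω : IsPosChebyshev ω I) (f : ℝ → ℝ)
    {s t x k : ℝ} (hs : 0 < s) (ht : 0 < t) (hk : 0 < k)
    (hx : x ∈ I) (hz : x + (s + t) * ((s + t) * k) ∈ I)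
    (h1 : 0 ≤ D3 ω f x (x + s * (s * k)) (x + (s + t) * (s * k)))
    (h2 : 0 ≤ D3 ω f (x + s * (s * k)) (x + s * (s * k) + s * (t * k))
      (x + s * (s * k) + (s + t) * (t * k)))
    (h3 : 0 ≤ D3 ω f (x + (s + t) * (s * k)) (x + (s + t) * (s * k) + t * (t * k))
      (x + (s + t) * (s * k) + (t + s) * (t * k))) :
    0 ≤ D3 ω f x (x + s * ((s + t) * k)) (x + (s + t) * ((s + t) * k)) := by
  have p1 : 0 < s * s * k := by positivity
  have p2 : 0 < s * t * k := by positivity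
  have p3 : 0 < t * t * k := by positivity
  rw [show x + s * (s * k) + s * (t * k) = x + s * ((s + t) * k) by ring] at h2
  rw [show x + (s + t) * (s * k) = x + s * ((s + t) * k) by ring] at h1 h3
  rw [show x + s * ((s + t) * k) + t * (t * k) = x + s * (s * k) + (s + t) * (t * k) by ring,
    show x + s * ((s + t) * k) + (t + s) * (t * k) = x + (s + t) * ((s + t) * k) by ring] at h3
  have mem : ∀ y, x ≤ y → y ≤ x + (s + t) * ((s + t) * k) → y ∈ I :=
    fun y hy hy' => hI.out hx hz ⟨hy, hy'⟩
  exact chain hω f hx (mem _ (by nlinarith) (by nlinarith)) (mem _ (by nlinarith) (by nlinarith))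
    (mem _ (by nlinarith) (by nlinarith)) hz (by nlinarith) (by nlinarith) (by nlinarith)
    (by nlinarith) h1 h2 h3

theorem global_of_small {ω : Fin 2 → ℝ → ℝ} {a b : ℝ}
    (hω : IsPosChebyshev ω (Set.Icc a b)) (f : ℝ → ℝ)
    {s t δ q : ℝ} (hs : 0 < s) (ht : 0 < t) (hq : 0 < q) (hqs : s ≤ q * (s + t))
    (hqt : t ≤ q * (s + t))
    (hsmall : ∀ x h : ℝ, 0 < h → a ≤ x → x + (s + t) * h ≤ b → (s + t) * h < δ →
      0 ≤ D3 ω f x (x + s * h) (x + (s + t) * h) ∧ 0 ≤ D3 ω f x (x + t * h) (x + (t + s) * h))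
    (n : ℕ) :
    ∀ x h : ℝ, 0 < h → a ≤ x → x + (s + t) * h ≤ b → (s + t) * h * q ^ n < δ →
      0 ≤ D3 ω f x (x + s * h) (x + (s + t) * h) ∧
      0 ≤ D3 ω f x (x + t * h) (x + (t + s) * h) := by
  induction n with
  | zero => simpa using hsmall
  | succ n ih =>
    intro x h hh hx hz hd
    obtain ⟨k, hk, rfl⟩ : ∃ k, 0 < k ∧ h = (s + t) * k :=
      ⟨h / (s + t), by positivity, by field_simp⟩
    have p1 : 0 < s * s * k := by positivity
    have p2 : 0 < s * t * k := by positivity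
    have p3 : 0 < t * t * k := by positivity
    have bnd : ∀ u, u ≤ q * (s + t) → (s + t) * (u * k) * q ^ n < δ := by
      intro u hu
      refine lt_of_le_of_lt ?_ hd
      calc (s + t) * (u * k) * q ^ n ≤ (s + t) * (q * (s + t) * k) * q ^ n := by gcongr
        _ = _ := by ring
    have Hs := fun y hy hy' => ih y (s * k) (by positivity) hy hy' (bnd s hqs)
    have Ht := fun y hy hy' => ih y (t * k) (by positivity) hy hy' (bnd t hqt)
    have hxI : x ∈ Set.Icc a b := ⟨hx, by nlinarith⟩
    have hzI : x + (s + t) * ((s + t) * k) ∈ Set.Icc a b := ⟨by nlinarith, hz⟩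
    constructor
    · exact refine_step Set.ordConnected_Icc hω f hs ht hk hxI hzI
        (Hs _ hx (by nlinarith)).1 (Ht _ (by nlinarith) (by nlinarith)).1
        (Ht _ (by nlinarith) (by nlinarith)).2
    · have := refine_step (s := t) (t := s) Set.ordConnected_Icc hω f ht hs hk hxI
        (by rwa [add_comm t s])
        (Ht _ hx (by nlinarith)).2 (Hs _ (by nlinarith) (by nlinarith)).2
        (Hs _ (by nlinarith) (by nlinarith)).1
      rwa [add_comm t s] at this ⊢

/-- **Corollary 11 (localizability of symmetric `((t₁,t₂),ω)`-convexity).**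
For `n = 2` and positive `t₁, t₂`, the function `f` is symmetrically
`((t₁,t₂),ω)`-convex on `I` (i.e. both `((t₁,t₂),ω)`- and `((t₂,t₁),ω)`-convex on `I`)
if and only if every point `p ∈ I` has a neighborhood `U` such that `f` is
symmetrically `((t₁,t₂),ω)`-convex on `U ∩ I`. -/
theorem symmetrically_tOmegaConvexOn_iff_locally
    (I : Set ℝ) (hI : I.OrdConnected) (hne : ∃ a ∈ I, ∃ b ∈ I, a < b)
    (ω : Fin 2 → ℝ → ℝ) (hω : IsPosChebyshev ω I)
    (t₁ t₂ : ℝ) (ht₁ : 0 < t₁) (ht₂ : 0 < t₂) (f : ℝ → ℝ) :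
    (TOmegaConvexOn ω ![t₁, t₂] I f ∧ TOmegaConvexOn ω ![t₂, t₁] I f) ↔
      ∀ p ∈ I, ∃ U ∈ nhds p,
        TOmegaConvexOn ω ![t₁, t₂] (U ∩ I) f ∧ TOmegaConvexOn ω ![t₂, t₁] (U ∩ I) f := by
  simp only [tOmega_iff]
  constructor
  · rintro ⟨h1, h2⟩ p _
    exact ⟨Set.univ, Filter.univ_mem, fun x hx h hh hz => h1 x hx.2 h hh hz.2,
      fun x hx h hh hz => h2 x hx.2 h hh hz.2⟩
  intro hloc
  have main : ∀ x ∈ I, ∀ h : ℝ, 0 < h → x + (t₁ + t₂) * h ∈ I →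
      0 ≤ D3 ω f x (x + t₁ * h) (x + (t₁ + t₂) * h) ∧
      0 ≤ D3 ω f x (x + t₂ * h) (x + (t₂ + t₁) * h) := by
    intro x hx h hh hz
    have hsub : Set.Icc x (x + (t₁ + t₂) * h) ⊆ I := hI.out hx hz
    have hω' : IsPosChebyshev ω (Set.Icc x (x + (t₁ + t₂) * h)) :=
      fun y hy hy' => hω y hy fun j => hsub (hy' j)
    choose! U hU hU1 hU2 using hloc
    obtain ⟨δ, hδ, hleb⟩ := lebesgue_number_lemma_of_metric
      (c := fun p : I => interior (U p)) (isCompact_Icc (a := x) (b := x + (t₁ + t₂) * h))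
      (fun p => isOpen_interior)
      (fun y hy => Set.mem_iUnion.2 ⟨⟨y, hsub hy⟩, mem_interior_iff_mem_nhds.2 (hU y (hsub hy))⟩)
    have hsmall : ∀ y k : ℝ, 0 < k → x ≤ y → y + (t₁ + t₂) * k ≤ x + (t₁ + t₂) * h →
        (t₁ + t₂) * k < δ →
        0 ≤ D3 ω f y (y + t₁ * k) (y + (t₁ + t₂) * k) ∧
        0 ≤ D3 ω f y (y + t₂ * k) (y + (t₂ + t₁) * k) := by
      intro y k hk hy hy' hd
      have hp : 0 < (t₁ + t₂) * k := by positivity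
      have hyI : y ∈ Set.Icc x (x + (t₁ + t₂) * h) := ⟨hy, by linarith⟩
      have hzI : y + (t₁ + t₂) * k ∈ Set.Icc x (x + (t₁ + t₂) * h) := ⟨by linarith, hy'⟩
      obtain ⟨p, hpU⟩ := hleb y hyI
      have m1 : y ∈ U p ∩ I := ⟨interior_subset (hpU (Metric.mem_ball_self hδ)), hsub hyI⟩
      have m2 : y + (t₁ + t₂) * k ∈ U p ∩ I := by
        refine ⟨interior_subset (hpU ?_), hsub hzI⟩
        rw [Metric.mem_ball, Real.dist_eq, add_sub_cancel_left, abs_of_pos hp]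
        exact hd
      exact ⟨hU1 p p.2 y m1 k hk m2, hU2 p p.2 y m1 k hk (by rwa [add_comm t₂ t₁])⟩
    have hT : 0 < t₁ + t₂ := by positivity
    set q := max t₁ t₂ / (t₁ + t₂) with hq
    have hqT : q * (t₁ + t₂) = max t₁ t₂ := by rw [hq]; field_simp
    have hq0 : 0 < q := div_pos (lt_max_of_lt_left ht₁) hT
    have hq1 : q < 1 := by
      rw [hq, div_lt_one hT]
      exact max_lt (by linarith) (by linarith)
    obtain ⟨n, hn⟩ := exists_pow_lt_of_lt_one (show 0 < δ / ((t₁ + t₂) * h) by positivity) hq1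
    refine global_of_small hω' f ht₁ ht₂ hq0 (hqT ▸ le_max_left _ _) (hqT ▸ le_max_right _ _)
      hsmall n x h hh le_rfl le_rfl ?_
    rw [lt_div_iff₀ (by positivity)] at hn
    linarith
  exact ⟨fun x hx h hh hz => (main x hx h hh hz).1,
    fun x hx h hh hz => (main x hx h hh (by rwa [add_comm t₁ t₂])).2⟩
end

section
/- Let n ∈ ℕ and define ω : ℝ → ℝ^{2n+1} by ω(x) = (1, cos x, sin x, cos 2x, sin 2x, …, cos nx, sin nx). Then for all real numbers x_1 < x_2 < ⋯ < x_{2n+1}, the determinant Φ_ω(x_1,…,x_{2n+1}) = det(ω_i(x_j)) equals 4^{n²} · ∏_{1 ≤ k < j ≤ 2n+1} sin((x_j − x_k)/2). Consequently, if I is an open interval of length at most 2π, then ω is a (2n+1)-dimensional positive Chebyshev system over I. -/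
/-- The `(2n+1)`-dimensional trigonometric system
`(1, cos x, sin x, cos 2x, sin 2x, …, cos nx, sin nx)`:
index `0` is the constant `1`, index `2k−1` is `cos (k·x)`, index `2k` is `sin (k·x)`. -/
noncomputable def trigOmegaOdd (n : ℕ) : Fin (2 * n + 1) → ℝ → ℝ :=
  fun i x =>
    if (i : ℕ) = 0 then 1
    else if (i : ℕ) % 2 = 1 then Real.cos (((((i : ℕ) + 1) / 2 : ℕ) : ℝ) * x)
    else Real.sin ((((i : ℕ) / 2 : ℕ) : ℝ) * x)

open Complex in
/-- Coefficients of the trigonometric system in the powers of `exp (I x)` (shifted by `n`). -/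
noncomputable def trigCoeffN (n i m : ℕ) : ℂ :=
    if i = 0 then (if m = n then 1 else 0)
    else if i % 2 = 1 then
      ((if m = n + (i + 1) / 2 then 1 else 0) +
        (if m + (i + 1) / 2 = n then 1 else 0)) / 2
    else
      ((if m + i / 2 = n then 1 else 0) -
        (if m = n + i / 2 then 1 else 0)) * I / 2

/-- The coefficient matrix. -/
noncomputable def trigCoeff (n : ℕ) : Matrix (Fin (2 * n + 1)) (Fin (2 * n + 1)) ℂ :=
  Matrix.of fun i m => trigCoeffN n i m

lemma det_corner {R : Type*} [CommRing R] (m : ℕ) (M : Matrix (Fin (m + 2)) (Fin (m + 2)) R)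
    (h0 : ∀ i : Fin m, M i.castSucc.castSucc 0 = 0)
    (h2 : ∀ j : Fin m, M (Fin.last m).castSucc j.castSucc.succ = 0)
    (h3 : ∀ j : Fin m, M (Fin.last (m + 1)) j.castSucc.succ = 0) :
    M.det = (-1) ^ m * (M (Fin.last m).castSucc 0 * M (Fin.last (m + 1)) (Fin.last (m + 1))
      - M (Fin.last (m + 1)) 0 * M (Fin.last m).castSucc (Fin.last (m + 1))) *
      (M.submatrix (fun i : Fin m => i.castSucc.castSucc) (fun j : Fin m => j.castSucc.succ)).det := by
  rw [Matrix.det_succ_column_zero, Fin.sum_univ_castSucc, Fin.sum_univ_castSucc]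
  simp only [h0, mul_zero, zero_mul, Finset.sum_const_zero, zero_add]
  rw [Matrix.det_succ_row _ (Fin.last m), Fin.sum_univ_castSucc]
  rw [Matrix.det_succ_row (M.submatrix (Fin.last (m + 1)).succAbove Fin.succ) (Fin.last m),
    Fin.sum_univ_castSucc]
  have e1 : (Fin.last m).castSucc.succAbove (Fin.last m) = Fin.last (m + 1) := by
    rw [Fin.succAbove_castSucc_self, Fin.succ_last]
  have e2 : ∀ i : Fin m, (Fin.last m).castSucc.succAbove i.castSucc = i.castSucc.castSucc := by
    intro i
    rw [Fin.succAbove_of_castSucc_lt]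
    simp [Fin.lt_def]
  simp only [Matrix.submatrix_apply, Fin.succAbove_last, e1, h2, h3, mul_zero, zero_mul,
    Finset.sum_const_zero, zero_add, Matrix.submatrix_submatrix]
  have f1 : M.submatrix ((Fin.last m).castSucc.succAbove ∘ Fin.castSucc) (Fin.succ ∘ Fin.castSucc)
     = M.submatrix (fun i : Fin m => i.castSucc.castSucc) (fun j : Fin m => j.castSucc.succ) := by
    ext i j
    simp [e2]
  have f2 : M.submatrix (Fin.castSucc ∘ Fin.castSucc) (Fin.succ ∘ Fin.castSucc)
     = M.submatrix (fun i : Fin m => i.castSucc.castSucc) (fun j : Fin m => j.castSucc.succ) := rfl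
  rw [f1, f2, Fin.succ_last]
  have s : (-1 : R) ^ (m + m) = 1 := Even.neg_one_pow ⟨m, rfl⟩
  simp only [Fin.val_last, Fin.val_castSucc, s]
  ring

open Complex in
lemma det_trigCoeff (n : ℕ) : (trigCoeff n).det = (I / 2) ^ n := by
  induction n with
  | zero =>
    have : trigCoeff 0 = 1 := by
      ext i j
      fin_cases i; fin_cases j; simp [trigCoeff, trigCoeffN]
    rw [this]; simp
  | succ n ih =>
    have key := det_corner (2 * n + 1) (trigCoeff (n + 1)) ?_ ?_ ?_
    · have hs : ((trigCoeff (n + 1)).submatrix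
          (fun i : Fin (2 * n + 1) => (i.castSucc.castSucc : Fin (2 * n + 1 + 2)))
          (fun j : Fin (2 * n + 1) => (j.castSucc.succ : Fin (2 * n + 1 + 2)))) = trigCoeff n := by
        ext i j
        change trigCoeffN (n + 1) (i : ℕ) ((j : ℕ) + 1) = trigCoeffN n i j
        unfold trigCoeffN
        have a1 : ∀ k : ℕ, ((j : ℕ) + 1 = n + 1 + k) = ((j : ℕ) = n + k) := by
          intro k; apply propext; omega
        have a2 : ∀ k : ℕ, ((j : ℕ) + 1 + k = n + 1) = ((j : ℕ) + k = n) := by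
          intro k; apply propext; omega
        have a3 : ((j : ℕ) + 1 = n + 1) = ((j : ℕ) = n) := by
          apply propext; omega
        simp only [a1, a2, a3]
      rw [hs, ih] at key
      refine key.trans ?_
      have b1 : trigCoeff (n + 1) (Fin.last (2 * n + 1)).castSucc 0 = 1 / 2 := by
        change trigCoeffN (n + 1) (2 * n + 1) (0) = _
        unfold trigCoeffN
        rw [if_neg (by omega), if_pos (by omega), if_neg (by omega), if_pos (by omega)]
        norm_num
      have b2 : trigCoeff (n + 1) (Fin.last (2 * n + 1)).castSucc (Fin.last (2 * n + 1 + 1))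
          = 1 / 2 := by
        change trigCoeffN (n + 1) (2 * n + 1) (2 * n + 1 + 1) = _
        unfold trigCoeffN
        rw [if_neg (by omega), if_pos (by omega), if_pos (by omega), if_neg (by omega)]
        norm_num
      have b3 : trigCoeff (n + 1) (Fin.last (2 * n + 1 + 1)) 0 = I / 2 := by
        change trigCoeffN (n + 1) (2 * n + 1 + 1) (0) = _
        unfold trigCoeffN
        rw [if_neg (by omega), if_neg (by omega), if_pos (by omega), if_neg (by omega)]
        norm_num
      have b4 : trigCoeff (n + 1) (Fin.last (2 * n + 1 + 1)) (Fin.last (2 * n + 1 + 1))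
          = - I / 2 := by
        change trigCoeffN (n + 1) (2 * n + 1 + 1) (2 * n + 1 + 1) = _
        unfold trigCoeffN
        rw [if_neg (by omega), if_neg (by omega), if_neg (by omega), if_pos (by omega)]
        norm_num
      rw [b1, b2, b3, b4]
      have s : (-1 : ℂ) ^ (2 * n + 1) = -1 := Odd.neg_one_pow ⟨n, rfl⟩
      rw [s]
      ring
    · intro i
      have := i.isLt
      change trigCoeffN (n + 1) ((i : ℕ)) (0) = 0
      unfold trigCoeffN
      generalize (i : ℕ) = q at *
      split_ifs <;> first | (exfalso; omega) | simp
    · intro j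
      have := j.isLt
      change trigCoeffN (n + 1) (2 * n + 1) ((j : ℕ) + 1) = 0
      unfold trigCoeffN
      generalize (j : ℕ) = q at *
      split_ifs <;> first | (exfalso; omega) | simp
    · intro j
      have := j.isLt
      change trigCoeffN (n + 1) (2 * n + 1 + 1) ((j : ℕ) + 1) = 0
      unfold trigCoeffN
      generalize (j : ℕ) = q at *
      split_ifs <;> first | (exfalso; omega) | simp

lemma prod_pairs {N : ℕ} (u : Fin (N + 1) → ℂ) :
    ∏ i, ∏ j ∈ Finset.Ioi i, (u i * u j) = ∏ i, u i ^ N := by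
  simp only [Finset.prod_mul_distrib]
  have : ∏ i, ∏ j ∈ Finset.Ioi i, u j = ∏ j, ∏ i ∈ Finset.Iio j, u j := by
    apply Finset.prod_comm'
    intro x y; simp
  rw [this, ← Finset.prod_mul_distrib]
  apply Finset.prod_congr rfl
  intro i _
  have := i.isLt
  rw [Finset.prod_const, Finset.prod_const, ← pow_add, Fin.card_Ioi, Fin.card_Iio]
  congr 1; omega

lemma sum_ite_fin (N k : ℕ) (hk : k < N) (f : ℕ → ℂ) (p : ℕ → Prop) [DecidablePred p]
    (hp : ∀ m, p m ↔ m = k) :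
    ∑ m : Fin N, (if p (m : ℕ) then (1 : ℂ) else 0) * f m = f k := by
  rw [Finset.sum_eq_single (⟨k, hk⟩ : Fin N)]
  · simp [hp]
  · intro b _ hb
    rw [if_neg, zero_mul]
    rw [hp]; intro h; exact hb (Fin.ext h)
  · simp

open Complex in
lemma trig_factor (n : ℕ) (x : Fin (2 * n + 1) → ℝ) :
    (Matrix.of fun i j => ((trigOmegaOdd n i (x j) : ℝ) : ℂ)) =
      trigCoeff n * (Matrix.vandermonde fun j => exp (x j * I)).transpose *
        Matrix.diagonal fun j => (exp (x j * I) ^ n)⁻¹ := by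
  ext i j
  have hi := i.isLt
  have hz : exp (x j * I) ≠ 0 := exp_ne_zero _
  rw [Matrix.mul_diagonal, Matrix.mul_apply]
  rw [← div_eq_mul_inv, eq_div_iff (pow_ne_zero _ hz)]
  simp only [Matrix.of_apply, Matrix.transpose_apply, Matrix.vandermonde_apply, trigOmegaOdd,
    trigCoeff, trigCoeffN]
  have E : ∀ k : ℕ, exp ((k : ℂ) * x j * I) = exp (x j * I) ^ k := by
    intro k; rw [← exp_nat_mul]; congr 1; ring
  have E' : ∀ k : ℕ, exp (-((k : ℂ) * x j) * I) = (exp (x j * I) ^ k)⁻¹ := by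
    intro k; rw [← exp_nat_mul, ← exp_neg]; congr 1; ring
  have D : ∀ k : ℕ, k ≤ n → (exp (x j * I) ^ k)⁻¹ * exp (x j * I) ^ n = exp (x j * I) ^ (n - k) := by
    intro k hk
    rw [pow_sub₀ _ hz hk, mul_comm]
  split_ifs with h1 h2
  · rw [sum_ite_fin _ n (by omega) (fun m => exp (x j * I) ^ m) (fun m => m = n) (fun m => Iff.rfl)]
    simp
  · generalize hk : ((i : ℕ) + 1) / 2 = k
    have hkn : k ≤ n := by omega
    have S : ∀ a b c : ℂ, (a + b) / 2 * c = (a * c + b * c) * (1 / 2) := by intros; ring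
    simp only [S]
    rw [← Finset.sum_mul, Finset.sum_add_distrib,
      sum_ite_fin _ (n + k) (by omega) (fun m => exp (x j * I) ^ m) (fun m => m = n + k)
        (fun m => Iff.rfl),
      sum_ite_fin _ (n - k) (by omega) (fun m => exp (x j * I) ^ m) (fun m => m + k = n)
        (fun m => by omega), ← D k hkn]
    push_cast
    rw [Complex.cos, E, E', pow_add]
    ring
  · generalize hk : (i : ℕ) / 2 = k
    have hkn : k ≤ n := by omega
    have S : ∀ a b c : ℂ, (a - b) * I / 2 * c = (a * c - b * c) * (I / 2) := by intros; ring
    simp only [S]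
    rw [← Finset.sum_mul, Finset.sum_sub_distrib,
      sum_ite_fin _ (n + k) (by omega) (fun m => exp (x j * I) ^ m) (fun m => m = n + k)
        (fun m => Iff.rfl),
      sum_ite_fin _ (n - k) (by omega) (fun m => exp (x j * I) ^ m) (fun m => m + k = n)
        (fun m => by omega), ← D k hkn]
    push_cast
    rw [Complex.sin, E, E', pow_add]
    ring

open Complex in
lemma exp_sub_exp_half (a b : ℝ) :
    exp (b * I) - exp (a * I) = ((Real.sin ((b - a) / 2) : ℝ) : ℂ) *
      (((1 + I) * exp (a / 2 * I)) * ((1 + I) * exp (b / 2 * I))) := by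
  have hd : (1 + I) * (1 + I) = 2 * I := by
    ring_nf; rw [I_sq]; ring
  have e1 : exp (b * I) = exp (b / 2 * I) * exp (b / 2 * I) := by
    rw [← exp_add]; congr 1; ring
  have e2 : exp (a * I) = exp (a / 2 * I) * exp (a / 2 * I) := by
    rw [← exp_add]; congr 1; ring
  have e3 : exp (((b : ℂ) - a) / 2 * I) = exp (b / 2 * I) * (exp (a / 2 * I))⁻¹ := by
    rw [← exp_neg, ← exp_add]; congr 1; ring
  have e4 : exp (-(((b : ℂ) - a) / 2) * I) = exp (a / 2 * I) * (exp (b / 2 * I))⁻¹ := by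
    rw [← exp_neg, ← exp_add]; congr 1; ring
  push_cast
  rw [Complex.sin, e3, e4, e1, e2]
  have ha := exp_ne_zero ((a : ℂ) / 2 * I)
  have hb := exp_ne_zero ((b : ℂ) / 2 * I)
  generalize exp ((a : ℂ) / 2 * I) = u at *
  generalize exp ((b : ℂ) / 2 * I) = v at *
  have : (1 + I) * u * ((1 + I) * v) = 2 * I * (u * v) := by rw [← hd]; ring
  rw [this]
  field_simp
  rw [I_sq]; ring

open Complex in
lemma Phi_trig (n : ℕ) (x : Fin (2 * n + 1) → ℝ) :
    Phi (trigOmegaOdd n) x = (4 : ℝ) ^ (n ^ 2) *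
      ∏ i, ∏ j ∈ Finset.Ioi i, Real.sin ((x j - x i) / 2) := by
  apply Complex.ofReal_injective
  have h1 : ((Phi (trigOmegaOdd n) x : ℝ) : ℂ) =
      (Matrix.of fun i j => ((trigOmegaOdd n i (x j) : ℝ) : ℂ)).det := by
    unfold Phi
    exact (Complex.ofRealHom).map_det _
  rw [h1, trig_factor, Matrix.det_mul, Matrix.det_mul, Matrix.det_transpose, Matrix.det_diagonal,
    Matrix.det_vandermonde, det_trigCoeff]
  simp only [exp_sub_exp_half]
  simp only [Finset.prod_mul_distrib (f := fun j => ((Real.sin _ : ℝ) : ℂ))]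
  rw [Finset.prod_mul_distrib, prod_pairs (fun i => (1 + I) * exp ((x i : ℂ) / 2 * I))]
  have h2 : ∀ i, ((1 + I) * exp ((x i : ℂ) / 2 * I)) ^ (2 * n) =
      (2 * I) ^ n * exp (x i * I) ^ n := by
    intro i
    have hd : (1 + I) ^ 2 = 2 * I := by
      ring_nf; rw [I_sq]; ring
    have e1 : exp ((x i : ℂ) / 2 * I) ^ 2 = exp (x i * I) := by
      rw [← exp_nat_mul]; congr 1; push_cast; ring
    rw [pow_mul, mul_pow, hd, e1, mul_pow]
  simp only [h2]
  rw [Finset.prod_mul_distrib, Finset.prod_const, Finset.card_univ, Fintype.card_fin,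
    Finset.prod_inv_distrib]
  have hne : ∏ i, exp ((x i : ℂ) * I) ^ n ≠ 0 :=
    Finset.prod_ne_zero_iff.mpr fun i _ => pow_ne_zero _ (exp_ne_zero _)
  have hc : (I / 2) ^ n * ((2 * I) ^ n) ^ (2 * n + 1) = 4 ^ (n ^ 2) := by
    have a : (I / 2) * (2 * I) = -1 := by
      have := I_mul_I
      linear_combination this
    have b : (2 * I) ^ 2 = (-1) * 4 := by rw [mul_pow, I_sq]; norm_num
    calc (I / 2) ^ n * ((2 * I) ^ n) ^ (2 * n + 1)
        = ((I / 2) * (2 * I)) ^ n * (((2 * I) ^ 2) ^ n) ^ n := by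
          rw [mul_pow (I / 2)]
          generalize 2 * I = w
          ring
      _ = (-1) ^ (n * (n + 1)) * 4 ^ (n ^ 2) := by
          rw [a, b]; rw [mul_pow, mul_pow]; ring
      _ = 4 ^ (n ^ 2) := by
          rw [Even.neg_one_pow (Nat.even_mul_succ_self n), one_mul]
  push_cast
  rw [← hc]
  generalize ∏ i, exp ((x i : ℂ) * I) ^ n = P at *
  field_simp

theorem trigOmegaOdd_det_and_posChebyshev (n : ℕ) (hn : 0 < n) :
    (∀ x : Fin (2 * n + 1) → ℝ, StrictMono x →
      Phi (trigOmegaOdd n) x =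
        (4 : ℝ) ^ (n ^ 2) *
          ∏ p ∈ Finset.univ.filter
              (fun p : Fin (2 * n + 1) × Fin (2 * n + 1) => p.1 < p.2),
            Real.sin ((x p.2 - x p.1) / 2)) ∧
    ∀ a b : ℝ, b - a ≤ 2 * Real.pi →
      IsPosChebyshev (trigOmegaOdd n) (Set.Ioo a b) := by
  constructor
  · intro x _
    rw [Phi_trig]
    congr 1
    rw [Finset.prod_filter, ← Finset.univ_product_univ, Finset.prod_product]
    apply Finset.prod_congr rfl
    intro i _
    rw [← Finset.prod_filter]
    apply Finset.prod_congr _ (fun _ _ => rfl)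
    ext j; simp
  · intro a b hab x hx hmem
    rw [Phi_trig]
    apply mul_pos (by positivity)
    apply Finset.prod_pos
    intro i _
    apply Finset.prod_pos
    intro j hj
    have h := hx (Finset.mem_Ioi.mp hj)
    have h1 := (hmem i).1
    have h2 := (hmem j).2
    apply Real.sin_pos_of_pos_of_lt_pi <;> linarith
end
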